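/- arXiv:1811.00356 — 7 statements merged into one kernel-verified Lean document; each statement's English description precedes it below -/
import Mathlib

section
/- Let p be a prime, G a finite p-group and N a normal subgroup of G. Then F(G) ≤ F(N) + F(G/N), where F denotes the Frattini length. -/
/-- The iterated Frattini series: `Φ⁰(G) = G` and `Φⁿ⁺¹(G) = Φ(Φⁿ(G))`,
viewed as subgroups of `G`. -/
def frattiniSeries (G : Type*) [Group G] : ℕ → Subgroup G
  | 0 => ⊤
  | n + 1 => (frattini (frattiniSeries G n)).map (frattiniSeries G n).subtype

/-- The Frattini length: the least `n` with `Φⁿ(G) = {1}`. -/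
noncomputable def frattiniLength (G : Type*) [Group G] : ℕ :=
  sInf {n | frattiniSeries G n = ⊥}

lemma frattini_le_comap_aux {p : ℕ} (hp : p.Prime) {H K : Type*} [Group H] [Group K] [Finite K]
    (hK : IsPGroup p K) (f : H →* K) : frattini H ≤ (frattini K).comap f := by
  have : Fact p.Prime := ⟨hp⟩
  have : Group.IsNilpotent K := hK.isNilpotent
  have key : ∀ M : Subgroup K, IsCoatom M → frattini H ≤ M.comap f := by
    intro M hM
    have : M.Normal := Subgroup.NormalizerCondition.normal_of_coatom M
      Group.normalizerCondition_of_isNilpotent hM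
    by_cases ht : M.comap f = ⊤
    · rw [ht]; exact le_top
    · apply frattini_le_coatom
      refine ⟨ht, fun L hL => ?_⟩
      have h1 : M < L.map f ⊔ M := by
        refine lt_of_le_of_ne le_sup_right fun h => ?_
        have h2 : L.map f ≤ M := by rw [h]; exact le_sup_left
        exact not_le_of_gt hL (Subgroup.map_le_iff_le_comap.mp h2)
      have h3 := hM.2 _ h1
      rw [eq_top_iff]
      intro x _
      have hx : f x ∈ L.map f ⊔ M := by rw [h3]; trivial
      obtain ⟨y, hy, z, hz, hyz⟩ := Subgroup.mem_sup_of_normal_right.mp hx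
      obtain ⟨l, hl, rfl⟩ := hy
      have h4 : l⁻¹ * x ∈ M.comap f := by
        rw [Subgroup.mem_comap, map_mul, ← hyz, map_inv, inv_mul_cancel_left]
        exact hz
      simpa using L.mul_mem hl (hL.le h4)
  intro x hx
  rw [Subgroup.mem_comap, frattini, Order.radical]
  simp only [Subgroup.mem_iInf]
  exact fun M hM => key M hM hx

lemma frattiniSeries_exists_aux (G : Type*) [Group G] [Finite G] :
    frattiniSeries G (frattiniLength G) = ⊥ := by
  have : {n | frattiniSeries G n = ⊥}.Nonempty := by
    by_contra hne
    rw [Set.not_nonempty_iff_eq_empty, Set.eq_empty_iff_forall_notMem] at hne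
    have hs : StrictAnti (frattiniSeries G) := by
      refine strictAnti_nat_of_succ_lt fun n => ?_
      have hn : frattiniSeries G n ≠ ⊥ := hne n
      refine lt_of_le_of_ne (Subgroup.map_subtype_le _) fun h => hn ?_
      have h1 : frattini (frattiniSeries G n) = ⊤ := by
        rw [eq_top_iff]
        rintro ⟨x, hx⟩ _
        have hx' : x ∈ frattiniSeries G (n + 1) := by rw [h]; exact hx
        obtain ⟨y, hy, hyx⟩ := hx'
        have : y = ⟨x, hx⟩ := Subtype.ext hyx
        exact this ▸ hy
      have h2 : (⊥ : Subgroup (frattiniSeries G n)) = ⊤ :=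
        frattini_nongenerating (by rw [h1]; simp)
      rw [Subgroup.eq_bot_iff_forall]
      intro x hx
      have h3 : (⟨x, hx⟩ : frattiniSeries G n) ∈ (⊥ : Subgroup (frattiniSeries G n)) := by
        rw [h2]; trivial
      exact congrArg Subtype.val (Subgroup.mem_bot.mp h3)
    exact not_injective_infinite_finite _ hs.injective
  exact Nat.sInf_mem this

/-- For a finite `p`-group `G` and a normal subgroup `N` of `G`,
`𝓕(G) ≤ 𝓕(N) + 𝓕(G/N)`. -/
theorem frattiniLength_le_of_normal (p : ℕ) (hp : p.Prime)
    (G : Type*) [Group G] [Finite G] (hG : IsPGroup p G)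
    (N : Subgroup G) [N.Normal] :
    frattiniLength G ≤ frattiniLength N + frattiniLength (G ⧸ N) := by
  have hA : ∀ k, frattiniSeries G k ≤ (frattiniSeries (G ⧸ N) k).comap (QuotientGroup.mk' N) := by
    intro k
    induction k with
    | zero => exact fun x _ => Subgroup.mem_top _
    | succ k ih =>
      rintro _ ⟨x, hx, rfl⟩
      let g : frattiniSeries G k →* frattiniSeries (G ⧸ N) k :=
        ((QuotientGroup.mk' N).comp (frattiniSeries G k).subtype).codRestrict _
          (fun y => ih y.2)
      exact ⟨g x, frattini_le_comap_aux hp ((hG.to_quotient N).to_subgroup _) g hx, rfl⟩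
  have hN : frattiniSeries G (frattiniLength (G ⧸ N)) ≤ N := by
    have := hA (frattiniLength (G ⧸ N))
    rw [frattiniSeries_exists_aux] at this
    intro x hx
    exact (QuotientGroup.eq_one_iff x).mp (Subgroup.mem_bot.mp (this hx))
  have hB : ∀ j, frattiniSeries G (frattiniLength (G ⧸ N) + j) ≤
      (frattiniSeries N j).map N.subtype := by
    intro j
    induction j with
    | zero => exact fun x hx => ⟨⟨x, hN hx⟩, Subgroup.mem_top _, rfl⟩
    | succ j ih =>
      rintro _ ⟨x, hx, rfl⟩
      have hmem : ∀ y : frattiniSeries G (frattiniLength (G ⧸ N) + j),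
          ∃ h : (y : G) ∈ N, (⟨y, h⟩ : N) ∈ frattiniSeries N j := by
        intro y
        obtain ⟨z, hz, hzy⟩ := ih y.2
        have h : (y : G) ∈ N := hzy ▸ z.2
        have : z = ⟨y, h⟩ := Subtype.ext hzy
        exact ⟨h, this ▸ hz⟩
      let g : frattiniSeries G (frattiniLength (G ⧸ N) + j) →* frattiniSeries N j :=
        { toFun := fun y => ⟨⟨y, (hmem y).1⟩, (hmem y).2⟩
          map_one' := rfl
          map_mul' := fun _ _ => rfl }
      exact ⟨(g x : N), ⟨g x, frattini_le_comap_aux hp ((hG.to_subgroup N).to_subgroup _) g hx,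
        rfl⟩, rfl⟩
  have hfin := hB (frattiniLength N)
  rw [frattiniSeries_exists_aux, Subgroup.map_bot, le_bot_iff, add_comm] at hfin
  exact Nat.sInf_le hfin
end

section
/- Let p be a prime and k a finite field with q elements whose characteristic is different from p. Let G be a finite p-group which admits a faithful irreducible representation on an N-dimensional k-vector space (N ≥ 1). Then F(G) ≤ ν_p(N) + p·log_p(q), where F denotes the Frattini length, ν_p the p-adic valuation, and log_p(q) the real logarithm of q to base p (so the inequality is an inequality of real numbers). -/
/-- A representation is irreducible if the space is nonzero and the only invariant
subspaces are `⊥` and `⊤`. -/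
def Representation.IsIrreducibleRep {k G V : Type*} [CommSemiring k] [Monoid G]
    [AddCommMonoid V] [Module k V] (ρ : Representation k G V) : Prop :=
  Nontrivial V ∧ ∀ W : Submodule k V, (∀ g : G, W.map (ρ g) ≤ W) → W = ⊥ ∨ W = ⊤


/-- Subgroup generated by `p`-th powers and commutators of elements of `H`. -/
def Psi (p : ℕ) {G : Type*} [Group G] (H : Subgroup G) : Subgroup G :=
  Subgroup.closure {z | (∃ x ∈ H, z = x ^ p) ∨ ∃ x ∈ H, ∃ y ∈ H, z = x * y * x⁻¹ * y⁻¹}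

theorem Psi_le {p : ℕ} {G : Type*} [Group G] {H K : Subgroup G}
    (h1 : ∀ x ∈ H, x ^ p ∈ K) (h2 : ∀ x ∈ H, ∀ y ∈ H, x * y * x⁻¹ * y⁻¹ ∈ K) : Psi p H ≤ K := by
  refine (Subgroup.closure_le _).2 ?_
  rintro z (⟨x, hx, rfl⟩ | ⟨x, hx, y, hy, rfl⟩)
  · exact h1 x hx
  · exact h2 x hx y hy

theorem pow_mem_Psi {p : ℕ} {G : Type*} [Group G] {H : Subgroup G} {x : G} (hx : x ∈ H) :
    x ^ p ∈ Psi p H := Subgroup.subset_closure (Or.inl ⟨x, hx, rfl⟩)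

theorem comm_mem_Psi {p : ℕ} {G : Type*} [Group G] {H : Subgroup G} {x y : G}
    (hx : x ∈ H) (hy : y ∈ H) : x * y * x⁻¹ * y⁻¹ ∈ Psi p H :=
  Subgroup.subset_closure (Or.inr ⟨x, hx, y, hy, rfl⟩)

theorem Psi_mono {p : ℕ} {G : Type*} [Group G] : Monotone (Psi p (G := G)) := fun _ _ h =>
  Psi_le (fun _ hx => pow_mem_Psi (h hx)) (fun _ hx _ hy => comm_mem_Psi (h hx) (h hy))

theorem Psi_le_self {p : ℕ} {G : Type*} [Group G] (H : Subgroup G) : Psi p H ≤ H :=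
  Psi_le (fun _ hx => H.pow_mem hx p)
    (fun _ hx _ hy => H.mul_mem (H.mul_mem (H.mul_mem hx hy) (H.inv_mem hx)) (H.inv_mem hy))

theorem map_Psi {p : ℕ} {G G' : Type*} [Group G] [Group G'] (f : G →* G') (H : Subgroup G) :
    (Psi p H).map f = Psi p (H.map f) := by
  apply le_antisymm
  · rw [Subgroup.map_le_iff_le_comap]
    refine Psi_le ?_ ?_
    · intro x hx
      simp only [Subgroup.mem_comap, map_pow]
      exact pow_mem_Psi (Subgroup.mem_map_of_mem f hx)
    · intro x hx y hy
      simp only [Subgroup.mem_comap, map_mul, map_inv]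
      exact comm_mem_Psi (Subgroup.mem_map_of_mem f hx) (Subgroup.mem_map_of_mem f hy)
  · refine Psi_le ?_ ?_
    · rintro _ ⟨x, hx, rfl⟩
      exact ⟨x ^ p, pow_mem_Psi hx, by simp⟩
    · rintro _ ⟨x, hx, rfl⟩ _ ⟨y, hy, rfl⟩
      exact ⟨_, comm_mem_Psi hx hy, by simp⟩

theorem map_Psi_iterate {p : ℕ} {G G' : Type*} [Group G] [Group G'] (f : G →* G') (n : ℕ)
    (H : Subgroup G) : ((Psi p)^[n] H).map f = (Psi p)^[n] (H.map f) := by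
  induction n generalizing H with
  | zero => rfl
  | succ n ih => rw [Function.iterate_succ_apply, Function.iterate_succ_apply, ih, map_Psi]

theorem frattini_le_Psi {p : ℕ} (hp : p.Prime) {G : Type*} [Group G] [Finite G] :
    frattini G ≤ Psi p (⊤ : Subgroup G) := by
  intro x hx
  by_contra hxP
  obtain ⟨M, hM⟩ := (Set.toFinite {K : Subgroup G | Psi p ⊤ ≤ K ∧ x ∉ K}).exists_maximal
    ⟨_, le_rfl, hxP⟩
  have hPM := hM.prop.1
  have hxM := hM.prop.2
  have hcomm : ∀ a b : G, a * b * a⁻¹ * b⁻¹ ∈ M := fun a b =>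
    hPM (comm_mem_Psi (Subgroup.mem_top a) (Subgroup.mem_top b))
  have hn : M.Normal := ⟨fun n hn g => by
    simpa using M.mul_mem (hcomm g n) hn⟩
  apply hxM
  refine frattini_le_coatom (K := M) ⟨?_, ?_⟩ hx
  · rintro rfl; exact hxM (Subgroup.mem_top x)
  intro K hK
  have hxK : x ∈ K := by
    by_contra h
    exact hK.not_ge (hM.le_of_ge ⟨hPM.trans hK.le, h⟩ hK.le)
  rw [eq_top_iff]
  intro y _
  by_cases hyM : y ∈ M
  · exact hK.le hyM
  have hx' : x ∈ M ⊔ Subgroup.zpowers y := by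
    by_contra h
    have := hM.le_of_ge (y := M ⊔ Subgroup.zpowers y) ⟨hPM.trans le_sup_left, h⟩ le_sup_left
    exact hyM (this (Subgroup.mem_sup_right (Subgroup.mem_zpowers y)))
  obtain ⟨m, hm, z, ⟨j, rfl⟩, hmz⟩ := Subgroup.mem_sup_of_normal_left.1 hx'
  have hyp : y ^ p ∈ M := hPM (pow_mem_Psi (Subgroup.mem_top y))
  have hcop : IsCoprime (p : ℤ) j := by
    rw [Prime.coprime_iff_not_dvd (Nat.prime_iff_prime_int.1 hp)]
    rintro ⟨c, rfl⟩
    apply hxM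
    rw [← hmz]
    refine M.mul_mem hm ?_
    simp only [zpow_mul, zpow_natCast]
    exact M.zpow_mem hyp c
  obtain ⟨u, v, huv⟩ := hcop
  have hyj : y ^ j ∈ K := by
    have : y ^ j = m⁻¹ * x := by rw [← hmz]; simp
    rw [this]
    exact K.mul_mem (K.inv_mem (hK.le hm)) hxK
  have : y = (y ^ p) ^ u * (y ^ j) ^ v := by
    rw [← zpow_natCast, ← zpow_mul, ← zpow_mul, ← zpow_add]
    conv_lhs => rw [← zpow_one y, ← huv]
    ring_nf
  rw [this]
  exact K.mul_mem (K.zpow_mem (hK.le hyp) u) (K.zpow_mem hyj v)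

theorem frattiniSeries_le {p : ℕ} (hp : p.Prime) {G : Type*} [Group G] [Finite G] (n : ℕ) :
    frattiniSeries G n ≤ (Psi p)^[n] ⊤ := by
  induction n with
  | zero => exact le_rfl
  | succ n ih =>
    rw [Function.iterate_succ_apply', frattiniSeries]
    refine le_trans ?_ (Psi_mono ih)
    refine (Subgroup.map_mono (frattini_le_Psi hp)).trans ?_
    rw [map_Psi]
    refine Psi_mono ?_
    rw [← MonoidHom.range_eq_map, Subgroup.range_subtype]

theorem Psi_normal {p : ℕ} {G : Type*} [Group G] {H : Subgroup G} (hH : H.Normal) :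
    (Psi p H).Normal := by
  refine ⟨fun n hn g => ?_⟩
  have h : (Psi p H).map (MulAut.conj g).toMonoidHom ≤ Psi p H := by
    rw [map_Psi]
    refine Psi_mono ?_
    rintro _ ⟨x, hx, rfl⟩
    exact hH.conj_mem x hx g
  exact h ⟨n, hn, rfl⟩

theorem Psi_iterate_normal {p : ℕ} {G : Type*} [Group G] {H : Subgroup G} (hH : H.Normal)
    (n : ℕ) : ((Psi p)^[n] H).Normal := by
  induction n with
  | zero => exact hH
  | succ n ih => rw [Function.iterate_succ_apply']; exact Psi_normal ih

theorem Psi_top_le {p : ℕ} (hp : p.Prime) {G : Type*} [Group G] (H : Subgroup G) [H.Normal]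
    (hi : H.index = p) : Psi p ⊤ ≤ H := by
  have : Fact p.Prime := ⟨hp⟩
  have hc : Nat.card (G ⧸ H) = p := hi
  have := isCyclic_of_prime_card hc
  refine Psi_le ?_ ?_
  · intro x _
    rw [← QuotientGroup.eq_one_iff, QuotientGroup.mk_pow, ← hc, pow_card_eq_one']
  · intro x _ y _
    rw [← QuotientGroup.eq_one_iff]
    simp only [QuotientGroup.mk_mul, QuotientGroup.mk_inv]
    rw [mul_comm' (x : G ⧸ H) y]
    group

/-- A proper subgroup of a finite `p`-group is contained in a normal subgroup of index `p`. -/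
theorem exists_index_p {p : ℕ} (hp : p.Prime) {G : Type*} [Group G] [Finite G]
    (hG : IsPGroup p G) (T : Subgroup G) (hT : T ≠ ⊤) :
    ∃ H : Subgroup G, T ≤ H ∧ H.Normal ∧ H.index = p := by
  have : Fact p.Prime := ⟨hp⟩
  obtain ⟨n, hn⟩ := IsPGroup.iff_card.1 hG
  obtain ⟨i, hi⟩ := IsPGroup.iff_card.1 (hG.to_subgroup T)
  have hle : i < n := by
    have h1 : Nat.card T < Nat.card G := by
      refine lt_of_le_of_ne (Subgroup.card_le_card_group T) fun h => hT ?_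
      exact Subgroup.eq_top_of_card_eq T h
    rw [hn, hi] at h1
    exact (Nat.pow_lt_pow_iff_right hp.one_lt).1 h1
  obtain ⟨H, hH, hTH⟩ := Sylow.exists_subgroup_card_pow_prime_le (n := i) (m := n - 1) p
    (by rw [hn]; exact pow_dvd_pow _ (by omega)) T hi (by omega)
  have hidx : H.index = p := by
    have := H.card_mul_index
    rw [hn, hH] at this
    have h2 : p ^ n = p ^ (n - 1) * p := by rw [← pow_succ]; congr 1; omega
    rw [h2] at this
    exact Nat.eq_of_mul_eq_mul_left (pow_pos hp.pos _) this
  refine ⟨H, hTH, ?_, hidx⟩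
  apply Subgroup.normal_of_index_eq_minFac_card
  rw [hidx, hn, Nat.Prime.pow_minFac hp (by omega)]

/-- A finite `p`-group has a normal abelian self-centralizing subgroup. -/
theorem exists_self_centralizing {p : ℕ} (hp : p.Prime) {G : Type*} [Group G] [Finite G]
    (hG : IsPGroup p G) : ∃ A : Subgroup G, A.Normal ∧ (∀ x ∈ A, ∀ y ∈ A, x * y = y * x) ∧
      ∀ g : G, (∀ x ∈ A, g * x = x * g) → g ∈ A := by
  have : Fact p.Prime := ⟨hp⟩
  obtain ⟨A, hA⟩ := (Set.toFinite {K : Subgroup G | K.Normal ∧ ∀ x ∈ K, ∀ y ∈ K,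
    x * y = y * x}).exists_maximal ⟨⊥, inferInstance, by simp⟩
  have hAn : A.Normal := hA.prop.1
  have hAc := hA.prop.2
  refine ⟨A, hAn, hAc, ?_⟩
  by_contra! hcon
  obtain ⟨g, hg, hgA⟩ := hcon
  let C := Subgroup.centralizer (A : Set G)
  have hgC : g ∈ C := Subgroup.mem_centralizer_iff.2 fun x hx => (hg x hx).symm
  have hQ : IsPGroup p (G ⧸ A) := hG.to_quotient A
  let D : Subgroup (G ⧸ A) := C.map (QuotientGroup.mk' A)
  have hDn : D.Normal := Subgroup.Normal.map inferInstance _ (QuotientGroup.mk'_surjective A)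
  have hDnt : D ≠ ⊥ := by
    intro h
    have : (QuotientGroup.mk' A g) ∈ D := ⟨g, hgC, rfl⟩
    rw [h, Subgroup.mem_bot] at this
    exact hgA ((QuotientGroup.eq_one_iff g).1 this)
  have hex : ∃ z ∈ D, z ∈ Subgroup.center (G ⧸ A) ∧ z ≠ 1 := by
    have hd : p ∣ Nat.card D := by
      have hnt : Nontrivial D := (Subgroup.nontrivial_iff_ne_bot D).2 hDnt
      obtain ⟨n, hn0, hn⟩ := (hQ.to_subgroup D).nontrivial_iff_card.mp hnt
      exact hn.symm ▸ dvd_pow_self _ (ne_of_gt hn0)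
    obtain ⟨b, hb, hb1⟩ := (hQ.of_equiv ConjAct.toConjAct).exists_fixed_point_of_prime_dvd_card_of_fixed_point
      D hd (a := (1 : D)) (fun g => smul_one g)
    refine ⟨b, b.2, Subgroup.mem_center_iff.2 fun g => ?_, fun h => hb1 (Subtype.ext h.symm)⟩
    have := congrArg Subtype.val (hb (ConjAct.toConjAct g))
    rw [ConjAct.Subgroup.val_conj_smul, ConjAct.toConjAct_smul] at this
    exact mul_inv_eq_iff_eq_mul.1 this
  obtain ⟨_, ⟨x, hx, rfl⟩, hz, hx1⟩ := hex
  have hxA : x ∉ A := fun h => hx1 ((QuotientGroup.eq_one_iff x).2 h)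
  have hcx : ∀ a ∈ A, a * x = x * a := Subgroup.mem_centralizer_iff.1 hx
  have hK : A ⊔ Subgroup.zpowers x ∈ {K : Subgroup G | K.Normal ∧ ∀ x ∈ K, ∀ y ∈ K,
      x * y = y * x} := by
    constructor
    · refine ⟨fun n hn g => ?_⟩
      obtain ⟨a, ha, _, ⟨j, rfl⟩, rfl⟩ := Subgroup.mem_sup_of_normal_left.1 hn
      have h1 : g * x * g⁻¹ ∈ A ⊔ Subgroup.zpowers x := by
        have h2 := Subgroup.mem_center_iff.1 hz (QuotientGroup.mk' A g)
        have h3 : g * x * g⁻¹ * x⁻¹ ∈ A := by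
          rw [← QuotientGroup.eq_one_iff]
          simp only [QuotientGroup.mk'_apply] at h2
          simp only [QuotientGroup.mk_mul, QuotientGroup.mk_inv]
          rw [h2]; group
        have : g * x * g⁻¹ = (g * x * g⁻¹ * x⁻¹) * x := by group
        rw [this]
        exact Subgroup.mul_mem_sup h3 (Subgroup.mem_zpowers x)
      have : g * (a * x ^ j) * g⁻¹ = (g * a * g⁻¹) * (g * x * g⁻¹) ^ j := by
        rw [conj_zpow]; group
      simp only
      rw [this]
      exact Subgroup.mul_mem _ (Subgroup.mem_sup_left (hAn.conj_mem a ha g))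
        (Subgroup.zpow_mem _ h1 j)
    · intro y hy z hz
      obtain ⟨a, ha, _, ⟨j, rfl⟩, rfl⟩ := Subgroup.mem_sup_of_normal_left.1 hy
      obtain ⟨b, hb, _, ⟨i, rfl⟩, rfl⟩ := Subgroup.mem_sup_of_normal_left.1 hz
      have e1 : Commute a b := hAc a ha b hb
      have e2 : Commute a (x ^ i) := (show Commute a x from hcx a ha).zpow_right i
      have e3 : Commute (x ^ j) b := (show Commute b x from hcx b hb).symm.zpow_left j
      have e4 : Commute (x ^ j) (x ^ i) := (Commute.refl x).zpow_zpow j i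
      exact ((e1.mul_right e2).mul_left (e3.mul_right e4))
  exact hxA (hA.le_of_ge hK le_sup_left (Subgroup.mem_sup_right (Subgroup.mem_zpowers x)))

theorem pow_p_pow_sub_one_dvd {p : ℕ} {w : ℤ} {j : ℕ} (hj : 1 ≤ j) (h : (p : ℤ) ^ j ∣ w - 1)
    (i : ℕ) : (p : ℤ) ^ (j + i) ∣ w ^ (p ^ i) - 1 := by
  induction i with
  | zero => simpa using h
  | succ i ih =>
    have h1 : (p : ℤ) ∣ w ^ (p ^ i) - 1 := (dvd_pow_self _ (by omega)).trans ih
    have h2 : w ^ (p ^ (i + 1)) - 1 =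
        (w ^ (p ^ i) - 1) * ∑ l ∈ Finset.range p, (w ^ (p ^ i)) ^ l := by
      rw [mul_comm, geom_sum_mul, ← pow_mul, ← pow_succ]
    rw [h2, ← add_assoc, pow_succ]
    refine mul_dvd_mul ih ?_
    rw [← ZMod.intCast_zmod_eq_zero_iff_dvd] at h1 ⊢
    push_cast at h1 ⊢
    have h3 : (w : ZMod p) ^ p ^ i = 1 := sub_eq_zero.1 h1
    simp [h3]

theorem group_base {p : ℕ} (hp : p.Prime) {G : Type*} [Group G] [Finite G] (hG : IsPGroup p G)
    (A : Subgroup G) (hA : A.Normal) (hself : ∀ g : G, (∀ x ∈ A, g * x = x * g) → g ∈ A)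
    (a b : G) (ha : A = Subgroup.zpowers a) (m : ℕ) (hm : orderOf a = p ^ m)
    (hb : ∀ g : G, ∃ x ∈ A, ∃ j : ℤ, g = x * b ^ j) : (Psi p)^[m] (⊤ : Subgroup G) = ⊥ := by
  have : Fact p.Prime := ⟨hp⟩
  have haA : a ∈ A := ha ▸ Subgroup.mem_zpowers a
  have hz1 : ∀ i : ℤ, a ^ i = 1 ↔ (p : ℤ) ^ m ∣ i := by
    intro i
    rw [← orderOf_dvd_iff_zpow_eq_one, hm]
    push_cast
    rfl
  have hcent : ∀ g : G, g * a * g⁻¹ = a → g ∈ A := by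
    intro g hg
    apply hself
    rw [ha]
    rintro _ ⟨i, rfl⟩
    have : Commute g a := mul_inv_eq_iff_eq_mul.1 hg
    exact this.zpow_right i
  have hpow : ∀ g : G, ∀ w : ℤ, g * a * g⁻¹ = a ^ w → ∀ n : ℕ,
      g ^ n * a * (g ^ n)⁻¹ = a ^ (w ^ n) := by
    intro g w hw n
    induction n with
    | zero => simp
    | succ n ih =>
      have : g ^ (n + 1) * a * (g ^ (n + 1))⁻¹ = g * (g ^ n * a * (g ^ n)⁻¹) * g⁻¹ := by
        rw [pow_succ']; group
      rw [this, ih, ← conj_zpow, hw, ← zpow_mul, pow_succ']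
  rcases Nat.eq_zero_or_pos m with rfl | hm0
  · have ha1 : a = 1 := by simpa using hm
    rw [Function.iterate_zero, id, eq_bot_iff]
    intro g _
    have : g ∈ A := hcent g (by rw [ha1]; simp)
    rw [ha, ha1] at this
    simpa using this
  have hact : ∀ g : G, ∃ w : ℤ, g * a * g⁻¹ = a ^ w ∧ (p : ℤ) ∣ w - 1 := by
    intro g
    have h1 := hA.conj_mem a haA g
    rw [ha] at h1
    obtain ⟨w, hw⟩ := h1
    simp only at hw
    refine ⟨w, hw.symm, ?_⟩
    obtain ⟨n, hn⟩ := hG g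
    have h2 := hpow g w hw.symm (p ^ n)
    rw [hn] at h2
    have h3 : a ^ (w ^ p ^ n - 1) = 1 := by
      rw [zpow_sub, ← h2]; simp
    rw [hz1] at h3
    have h4 := (dvd_pow_self (p : ℤ) hm0.ne').trans h3
    rw [← ZMod.intCast_zmod_eq_zero_iff_dvd] at h4 ⊢
    push_cast at h4 ⊢
    rwa [ZMod.pow_card_pow] at h4
  have hbm : b ^ p ^ m = 1 := by
    obtain ⟨w, hw, hpw⟩ := hact b
    by_cases hcase : (p : ℤ) ^ m ∣ w - 1
    · have h1 : a ^ (w - 1) = 1 := (hz1 _).2 hcase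
      have h2 : a ^ w = a := by
        rw [zpow_sub, zpow_one, mul_inv_eq_one] at h1; exact h1
      have h3 := hcent b (hw.trans h2)
      rw [ha] at h3
      obtain ⟨i, hi⟩ := h3
      simp only at hi
      rw [← hi, ← zpow_natCast, ← zpow_mul, hz1]
      push_cast
      exact Dvd.intro_left i rfl
    · have hne : w - 1 ≠ 0 := by
        intro h; rw [h] at hcase; exact hcase (dvd_zero _)
      have hfin : FiniteMultiplicity (p : ℤ) (w - 1) :=
        Int.finiteMultiplicity_iff.2 ⟨by simpa using hp.ne_one, hne⟩
      obtain ⟨u, hu, hpu⟩ := hfin.exists_eq_pow_mul_and_not_dvd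
      set j := multiplicity (p : ℤ) (w - 1) with hj
      have hj1 : 1 ≤ j := by
        rw [hj]; exact hfin.le_multiplicity_of_pow_dvd (by simpa using hpw)
      have hjm : j < m := by
        by_contra h
        exact hcase ((pow_dvd_pow _ (not_lt.1 h)).trans (hu ▸ Dvd.intro _ rfl))
      have h1 := pow_p_pow_sub_one_dvd (p := p) hj1 (Dvd.intro _ hu.symm) (m - j)
      rw [show j + (m - j) = m by omega, ← hz1, zpow_sub, zpow_one, mul_inv_eq_one] at h1
      have h2 := hcent (b ^ p ^ (m - j)) ((hpow b w hw _).trans h1)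
      rw [ha] at h2
      obtain ⟨i, hi⟩ := h2
      simp only at hi
      have h3 : a ^ (i * (w - 1)) = 1 := by
        have h4 : b * a ^ i * b⁻¹ = a ^ i := by
          rw [hi]; group
        rw [← conj_zpow, hw, ← zpow_mul] at h4
        rw [show i * (w - 1) = w * i - i by ring, zpow_sub, h4]; simp
      rw [hz1, hu, show m = j + (m - j) by omega, pow_add,
        show i * ((p : ℤ) ^ j * u) = (p : ℤ) ^ j * (i * u) by ring] at h3
      have h5 := Int.dvd_of_mul_dvd_mul_left (by exact_mod_cast (pow_pos hp.pos j).ne') h3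
      have h6 : (p : ℤ) ^ (m - j) ∣ i := by
        refine IsCoprime.dvd_of_dvd_mul_right (IsCoprime.pow_left ?_) h5
        exact (Prime.coprime_iff_not_dvd (Nat.prime_iff_prime_int.1 hp)).2 hpu
      rw [show m = (m - j) + j by omega, pow_add, pow_mul, ← hi, ← zpow_natCast, ← zpow_mul, hz1]
      obtain ⟨c, hc⟩ := h6
      refine ⟨c, ?_⟩
      rw [hc, show m = (m - j) + j by omega, pow_add]
      push_cast
      rw [show m - j + j - j = m - j by omega]
      ring
  have hZn : ∀ i : ℕ, (Subgroup.zpowers (a ^ p ^ i)).Normal := by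
    intro i
    refine ⟨?_⟩
    rintro _ ⟨s, rfl⟩ g
    obtain ⟨w, hw, -⟩ := hact g
    refine ⟨w * s, ?_⟩
    simp only
    rw [← conj_zpow, ← conj_pow, hw, ← zpow_natCast, ← zpow_natCast, ← zpow_mul, ← zpow_mul,
      ← zpow_mul]
    ring_nf
  have key : ∀ i : ℕ, (Psi p)^[i] (⊤ : Subgroup G) ≤
      Subgroup.zpowers (a ^ p ^ i) ⊔ Subgroup.zpowers (b ^ p ^ i) := by
    intro i
    induction i with
    | zero =>
      intro g _
      obtain ⟨x, hx, j, rfl⟩ := hb g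
      refine Subgroup.mul_mem_sup ?_ ?_
      · simpa [ha] using hx
      · exact ⟨j, by simp⟩
    | succ i ih =>
      rw [Function.iterate_succ_apply']
      refine (Psi_mono ih).trans ?_
      have := hZn i
      have := hZn (i + 1)
      let Z := Subgroup.zpowers (a ^ p ^ (i + 1))
      have hc1 : ∀ g : G, ∀ s : ℤ, Commute (g : G ⧸ Z) (((a ^ p ^ i) ^ s : G) : G ⧸ Z) := by
        intro g s
        obtain ⟨w, hw, v, hv⟩ := hact g
        have : g * (a ^ p ^ i) ^ s * g⁻¹ * ((a ^ p ^ i) ^ s)⁻¹ ∈ Z := by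
          refine ⟨v * s, ?_⟩
          simp only
          rw [← conj_zpow, ← conj_pow, hw, ← zpow_natCast, ← zpow_natCast, ← zpow_natCast,
            ← zpow_mul, ← zpow_mul, ← zpow_mul, ← zpow_mul, ← zpow_neg, ← zpow_add]
          rw [show w = 1 + p * v by rw [← hv]; ring]
          push_cast
          congr 1
          ring
        rw [← QuotientGroup.eq_one_iff] at this
        simp only [QuotientGroup.mk_mul, QuotientGroup.mk_inv] at this
        rw [mul_inv_eq_one, mul_inv_eq_iff_eq_mul] at this
        exact this
      refine Psi_le ?_ ?_
      · intro g hg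
        obtain ⟨_, ⟨s, rfl⟩, _, ⟨t, rfl⟩, rfl⟩ := Subgroup.mem_sup_of_normal_left.1 hg
        have h1 : (((a ^ p ^ i) ^ s * (b ^ p ^ i) ^ t) ^ p) * ((b ^ p ^ (i + 1)) ^ t)⁻¹ ∈ Z := by
          rw [← QuotientGroup.eq_one_iff]
          simp only [QuotientGroup.mk_mul, QuotientGroup.mk_inv, QuotientGroup.mk_pow (N := Z) (n := p)]
          rw [(hc1 ((b ^ p ^ i) ^ t) s).symm.mul_pow]
          rw [← QuotientGroup.mk_pow, ← QuotientGroup.mk_pow]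
          have e1 : ((a ^ p ^ i) ^ s) ^ p = (a ^ p ^ (i + 1)) ^ s := by
            rw [← zpow_natCast, ← zpow_natCast, ← zpow_natCast, ← zpow_mul, ← zpow_mul, ← zpow_mul]
            congr 1; push_cast; ring
          have e2 : ((b ^ p ^ i) ^ t) ^ p = (b ^ p ^ (i + 1)) ^ t := by
            rw [← zpow_natCast, ← zpow_natCast, ← zpow_natCast, ← zpow_mul, ← zpow_mul, ← zpow_mul]
            congr 1; push_cast; ring
          rw [e2, mul_inv_cancel_right, QuotientGroup.eq_one_iff, e1]
          exact ⟨s, rfl⟩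
        have h2 := Subgroup.mul_mem_sup h1
          (show (b ^ p ^ (i + 1)) ^ t ∈ Subgroup.zpowers (b ^ p ^ (i + 1)) from ⟨t, rfl⟩)
        rwa [inv_mul_cancel_right] at h2
      · intro g hg h hh
        obtain ⟨_, ⟨s, rfl⟩, _, ⟨t, rfl⟩, rfl⟩ := Subgroup.mem_sup_of_normal_left.1 hg
        obtain ⟨_, ⟨s', rfl⟩, _, ⟨t', rfl⟩, rfl⟩ := Subgroup.mem_sup_of_normal_left.1 hh
        refine Subgroup.mem_sup_left (?_ : _ ∈ Z)
        rw [← QuotientGroup.eq_one_iff]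
        simp only [QuotientGroup.mk_mul, QuotientGroup.mk_inv]
        rw [mul_inv_eq_one, mul_inv_eq_iff_eq_mul]
        have hbb : Commute (((b ^ p ^ i) ^ t : G) : G ⧸ Z) (((b ^ p ^ i) ^ t' : G) : G ⧸ Z) := by
          have : Commute ((b ^ p ^ i) ^ t) ((b ^ p ^ i) ^ t') := (Commute.refl _).zpow_zpow t t'
          exact this.map (QuotientGroup.mk' Z)
        exact ((hc1 _ s').mul_left (hc1 _ s')).mul_right
          ((hc1 _ s).symm.mul_left hbb)
  have := key m
  rw [hbm, ← hm, pow_orderOf_eq_one] at this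
  simpa using this

theorem arith_bound {p : ℕ} (hp : p.Prime) {q N m : ℕ} (hq : 2 ≤ q) (hpq : ¬ p ∣ q) (hN : 1 ≤ N)
    (h : p ^ m ∣ q ^ N - 1) : m ≤ N.factorization p + Nat.log p (q ^ p) := by
  have : Fact p.Prime := ⟨hp⟩
  rw [Nat.factorization_def N hp]
  have hval : ∀ d, 1 ≤ d → d ≤ p → padicValNat p (q ^ d - 1) ≤ Nat.log p (q ^ p) := by
    intro d hd hdp
    apply Nat.le_log_of_pow_le hp.one_lt
    have h1 : 1 < q ^ d := Nat.one_lt_pow (by omega) (by omega)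
    calc p ^ padicValNat p (q ^ d - 1) ≤ q ^ d - 1 := Nat.le_of_dvd (by omega) pow_padicValNat_dvd
      _ ≤ q ^ d := Nat.sub_le _ _
      _ ≤ q ^ p := Nat.pow_le_pow_right (by omega) hdp
  have hdv : ∀ d, 1 ≤ d → m ≤ padicValNat p ((q ^ d) ^ N - 1) := by
    intro d hd
    have h1 : 1 < (q ^ d) ^ N := Nat.one_lt_pow (by omega) (Nat.one_lt_pow (by omega) (by omega))
    rw [← padicValNat_dvd_iff_le (by omega)]
    refine h.trans ?_
    rw [← pow_mul, mul_comm, pow_mul]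
    simpa using Nat.sub_dvd_pow_sub_pow (q ^ N) 1 d
  rcases hp.eq_two_or_odd' with rfl | hodd
  · have h1 := hdv 2 (by omega)
    have h2 := hval 2 (by omega) le_rfl
    rw [← pow_mul] at h1
    have h3 := padicValNat.pow_two_sub_one (x := q) (n := 2 * N) (by omega) hpq (by omega) (by simp)
    have h4 : q ^ 2 - 1 = (q + 1) * (q - 1) := by simpa using Nat.pow_two_sub_pow_two q 1
    rw [h4, padicValNat.mul (by omega) (by omega)] at h2
    rw [padicValNat.mul (by omega) (by omega), padicValNat_self] at h3
    omega
  · have hp2 := hp.two_le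
    have h1 := hdv (p - 1) (by omega)
    have h2 := hval (p - 1) (by omega) (by omega)
    have h0 : 1 < q ^ (p - 1) := Nat.one_lt_pow (by omega) (by omega)
    have hcop : Nat.Coprime q p := ((Nat.Prime.coprime_iff_not_dvd hp).2 hpq).symm
    have h3 : p ∣ q ^ (p - 1) - 1 := by
      have := Nat.ModEq.pow_totient hcop
      rw [Nat.totient_prime hp] at this
      exact (Nat.modEq_iff_dvd' h0.le).1 this.symm
    have h4 := padicValNat.pow_sub_pow hodd h0 h3
      (fun h => hpq (hp.dvd_of_dvd_pow h)) (n := N) (by omega)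
    rw [one_pow] at h4
    omega

theorem clifford {p : ℕ} (hp : p.Prime) {k G V E : Type*} [Field k] [Group G] [Finite G]
    (hG : IsPGroup p G) [AddCommGroup V] [Module k V] [FiniteDimensional k V]
    (ρ : Representation k G V) (hirr : ρ.IsIrreducibleRep)
    [CommRing E] [Algebra k E] [Module E V] [IsScalarTower k E V] [FaithfulSMul E V]
    (θ : G → E → E) (hθ : ∀ g x v, ρ g (x • v) = θ g x • ρ g v) :
    IsField E ∨ ∃ H : Subgroup G, H.Normal ∧ H.index = p ∧ ∃ U : Submodule k V,
      (∀ h ∈ H, ∀ u ∈ U, ρ h u ∈ U) ∧ U ≠ ⊥ ∧ p * Module.finrank k U = Module.finrank k V ∧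
      ∀ U' : Submodule k V, U' ≤ U → (∀ h ∈ H, ∀ u ∈ U', ρ h u ∈ U') → U' = ⊥ ∨ U' = U := by
  classical
  obtain ⟨hnt, hirr⟩ := hirr
  have hirr' : ∀ W : Submodule k V, (∀ g : G, ∀ w ∈ W, ρ g w ∈ W) → W ≠ ⊥ → W = ⊤ := by
    intro W hW h0
    refine (hirr W fun g => ?_).resolve_left h0
    rintro _ ⟨w, hw, rfl⟩
    exact hW g w hw
  have hinv : ∀ g v, ρ g (ρ g⁻¹ v) = v := fun g v => by
    rw [← Module.End.mul_apply, ← map_mul]; simp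
  have hinv' : ∀ g v, ρ g⁻¹ (ρ g v) = v := fun g v => by
    rw [← Module.End.mul_apply, ← map_mul]; simp
  have hinj : ∀ g v, ρ g v = 0 ↔ v = 0 := fun g v => by
    constructor
    · intro h; rw [← hinv' g v, h, map_zero]
    · rintro rfl; exact map_zero _
  have hθ' : ∀ g x v, x • ρ g v = ρ g (θ g⁻¹ x • v) := by
    intro g x v
    rw [← hinv g (x • ρ g v), hθ g⁻¹, hinv']
  have : IsArtinian E V := isArtinian_of_tower k inferInstance
  have : Nontrivial E := Module.nontrivial E V
  obtain ⟨S, hS, -⟩ := (eq_bot_or_exists_atom_le (⊤ : Submodule E V)).resolve_left top_ne_bot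
  obtain ⟨s₁, hs₁, hs₁0⟩ := S.exists_mem_ne_zero_of_ne_bot hS.1
  let I : G → Ideal E := fun g =>
    { carrier := {x | ∀ s ∈ S, x • ρ g s = 0}
      add_mem' := fun {x y} hx hy s hs => by rw [add_smul, hx s hs, hy s hs, add_zero]
      zero_mem' := fun s _ => zero_smul _ _
      smul_mem' := fun c x hx s hs => by rw [smul_assoc, hx s hs, smul_zero] }
  have hI : ∀ g x, x ∈ I g ↔ ∀ s ∈ S, x • ρ g s = 0 := fun g x => Iff.rfl
  have hImul : ∀ g h x, x ∈ I (g * h) ↔ θ g⁻¹ x ∈ I h := by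
    intro g h x
    simp only [hI, map_mul, Module.End.mul_apply, hθ' g, hinj]
  have hImul' : ∀ g h x, θ g x ∈ I (g * h) ↔ x ∈ I h := by
    intro g h x
    simp only [hI, map_mul, Module.End.mul_apply, ← hθ g, hinj]
  have hmax : ∀ g, (I g).IsMaximal := by
    intro g
    rw [Ideal.isMaximal_iff]
    constructor
    · intro h
      have := h s₁ hs₁
      rw [one_smul, hinj] at this
      exact hs₁0 this
    · intro J x hJ hx hxJ
      simp only [hI, not_forall] at hx
      obtain ⟨s, hs, hxs⟩ := hx
      rw [hθ', hinj] at hxs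
      have hspan : ∀ t ∈ S, t ≠ 0 → Submodule.span E {t} = S := by
        intro t ht ht0
        refine (hS.le_iff.1 ((Submodule.span_singleton_le_iff_mem _ _).2 ht)).resolve_left ?_
        simpa using ht0
      have h1 : s ∈ Submodule.span E {θ g⁻¹ x • s} := by
        rw [hspan _ (S.smul_mem _ hs) hxs]; exact hs
      obtain ⟨z, hz⟩ := Submodule.mem_span_singleton.1 h1
      have hs0 : s ≠ 0 := by rintro rfl; simp at hxs
      have h2 : 1 - θ g z * x ∈ I g := by
        intro t ht
        rw [← hspan s hs hs0] at ht
        obtain ⟨c, rfl⟩ := Submodule.mem_span_singleton.1 ht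
        rw [sub_smul, one_smul, mul_smul, hθ' g x, ← hθ, smul_comm (θ g⁻¹ x) c, smul_comm z c, hz,
          sub_self]
      have := J.add_mem (hJ h2) (J.mul_mem_left (θ g z) hxJ)
      simpa using this
  let T : Subgroup G :=
    { carrier := {g | ∀ x, x ∈ I g ↔ x ∈ I 1}
      one_mem' := fun x => Iff.rfl
      mul_mem' := fun {g h} hg hh x => by
        rw [hImul, hh, ← hImul, mul_one]; exact hg x
      inv_mem' := fun {g} hg x => by
        rw [← hImul' g, mul_inv_cancel, ← hg, ← hImul' g 1, mul_one] }
  have hT : ∀ g h, (∀ x, x ∈ I g ↔ x ∈ I h) → g⁻¹ * h ∈ T := by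
    intro g h hgh x
    rw [← hImul' g, mul_inv_cancel_left, ← hgh, ← hImul' g 1, mul_one]
  by_cases hTtop : T = ⊤
  · left
    have hTm : ∀ g x, x ∈ I g ↔ x ∈ I 1 := fun g => (hTtop ▸ Subgroup.mem_top g : g ∈ T)
    let W : Submodule k V := (Submodule.torsionBySet E V (I 1)).restrictScalars k
    have hW : ∀ v, v ∈ W ↔ ∀ x ∈ I 1, x • v = 0 := by
      intro v
      simp [W, Submodule.mem_torsionBySet_iff]
    have hWtop : W = ⊤ := by
      apply hirr'
      · intro g w hw
        rw [hW] at hw ⊢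
        intro x hx
        rw [hθ', hw, map_zero]
        rw [← hImul, hTm]; exact hx
      · intro h
        apply hs₁0
        have : s₁ ∈ W := (hW s₁).2 fun x hx => by simpa using hx s₁ hs₁
        rw [h] at this
        simpa using this
    rw [Ring.isField_iff_maximal_bot]
    have : I 1 = ⊥ := by
      rw [eq_bot_iff]
      intro x hx
      rw [Ideal.mem_bot]
      apply FaithfulSMul.eq_of_smul_eq_smul (α := V)
      intro v
      rw [zero_smul]
      exact (hW v).1 (hWtop ▸ Submodule.mem_top) x hx
    rw [← this]
    exact hmax 1
  · right
    obtain ⟨H, hTH, hHn, hHi⟩ := exists_index_p hp hG T hTtop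
    refine ⟨H, hHn, hHi, ?_⟩
    have : Fintype H := Fintype.ofFinite H
    let J : G → Ideal E := fun g => ⨅ h ∈ (Finset.univ : Finset H), I (g * h)
    have hJ : ∀ g x, x ∈ J g ↔ ∀ h ∈ H, x ∈ I (g * h) := by
      intro g x
      simp [J]
    have hcop : ∀ g g', g⁻¹ * g' ∉ H → J g ⊔ J g' = ⊤ := by
      intro g g' hgg
      refine Ideal.iInf_sup_eq_top fun h _ => Ideal.sup_iInf_eq_top fun h' _ => ?_
      refine Ideal.IsMaximal.coprime_of_ne (hmax _) (hmax _) fun heq => hgg ?_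
      have h1 := hTH (hT (g * h) (g' * h') (fun x => by rw [heq]))
      have h2 := H.mul_mem (H.mul_mem h.2 h1) (H.inv_mem h'.2)
      convert h2 using 1
      group
    let U : G → Submodule k V := fun g => (Submodule.torsionBySet E V (J g)).restrictScalars k
    have hU : ∀ g v, v ∈ U g ↔ ∀ x ∈ J g, x • v = 0 := by
      intro g v
      simp [U, Submodule.mem_torsionBySet_iff]
    have hUmul : ∀ g h v, v ∈ U h → ρ g v ∈ U (g * h) := by
      intro g h v hv
      rw [hU] at hv ⊢
      intro x hx
      rw [hθ', hv, map_zero]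
      rw [hJ] at hx ⊢
      intro h' hh'
      rw [← hImul, ← mul_assoc]
      exact hx h' hh'
    have hUH : ∀ h ∈ H, U h = U 1 := by
      intro h hh
      have : J h = J 1 := by
        ext x
        rw [hJ, hJ]
        constructor
        · intro hx h' hh'
          have := hx (h⁻¹ * h') (H.mul_mem (H.inv_mem hh) hh')
          simpa using this
        · intro hx h' hh'
          have := hx (h * h') (H.mul_mem hh hh')
          simpa using this
      simp only [U, this]
    have hU1 : ∀ h ∈ H, ∀ u ∈ U 1, ρ h u ∈ U 1 := by
      intro h hh u hu
      have := hUmul h 1 u hu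
      rwa [mul_one, hUH h hh] at this
    have hU0 : U 1 ≠ ⊥ := by
      intro h
      apply hs₁0
      have : s₁ ∈ U 1 := (hU 1 s₁).2 fun x hx => by
        have := (hJ 1 x).1 hx 1 H.one_mem s₁ hs₁
        simpa using this
      rw [h] at this
      simpa using this
    have hind : iSupIndep fun q : G ⧸ H => U q.out := by
      have hE : iSupIndep fun q : G ⧸ H => Submodule.torsionBySet E V (J q.out) := by
        cases nonempty_fintype (G ⧸ H)
        rw [iSupIndep_iff_supIndep_univ]
        refine Submodule.supIndep_torsionBySet_ideal ?_
        intro q _ q' _ hqq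
        refine hcop _ _ fun h => hqq ?_
        rw [← QuotientGroup.eq] at h
        simpa using h
      rw [iSupIndep_def] at hE ⊢
      intro q
      have h1 := hE q
      simp only [U]
      simp_rw [← Submodule.restrictScalars_iSup]
      rw [Submodule.disjoint_def] at h1 ⊢
      exact h1
    have hdim : ∀ U' : Submodule k V, U' ≤ U 1 → (∀ h ∈ H, ∀ u ∈ U', ρ h u ∈ U') → U' ≠ ⊥ →
        p * Module.finrank k U' = Module.finrank k V := by
      intro U' hle hst h0
      let F : G ⧸ H → Submodule k V := fun q => U'.map (ρ q.out)
      have hFind : iSupIndep F := by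
        refine hind.mono ?_
        rintro q _ ⟨u, hu, rfl⟩
        have := hUmul q.out 1 u (hle hu)
        rwa [mul_one] at this
      have hFtop : ⨆ q, F q = ⊤ := by
        have hg : ∀ g : G, ∀ u ∈ U', ρ g u ∈ ⨆ q, F q := by
          intro g u hu
          refine Submodule.mem_iSup_of_mem (g : G ⧸ H) ⟨ρ ((g : G ⧸ H).out⁻¹ * g) u, ?_, ?_⟩
          · refine hst _ ?_ u hu
            rw [← QuotientGroup.eq]; simp
          · rw [map_mul, Module.End.mul_apply, hinv]
        apply hirr'
        · intro g
          have : ⨆ q, F q ≤ (⨆ q, F q).comap (ρ g) := by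
            refine iSup_le ?_
            rintro q _ ⟨u, hu, rfl⟩
            rw [Submodule.mem_comap, ← Module.End.mul_apply, ← map_mul]
            exact hg _ u hu
          exact fun w hw => this hw
        · intro h
          apply h0
          rw [eq_bot_iff]
          intro u hu
          have := hg 1 u hu
          rw [h] at this
          simpa using this
      have hInternal := DirectSum.isInternal_submodule_of_iSupIndep_of_iSup_eq_top hFind hFtop
      cases nonempty_fintype (G ⧸ H)
      have h1 := (LinearEquiv.ofBijective (DirectSum.coeLinearMap F) hInternal).finrank_eq
      rw [← h1, Module.finrank_directSum]
      have h2 : ∀ q, Module.finrank k (F q) = Module.finrank k U' := by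
        intro q
        refine (LinearEquiv.finrank_eq (Submodule.equivMapOfInjective (ρ q.out) ?_ U')).symm
        exact (injective_iff_map_eq_zero _).2 fun v hv => (hinj _ v).1 hv
      simp only [h2]
      rw [Finset.sum_const, Finset.card_univ, ← Nat.card_eq_fintype_card]
      change _ = H.index • _
      rw [hHi, smul_eq_mul]
    refine ⟨U 1, hU1, hU0, hdim _ le_rfl hU1 hU0, ?_⟩
    intro U' hle hst
    by_cases h0 : U' = ⊥
    · exact Or.inl h0
    · right
      refine Submodule.eq_of_le_of_finrank_eq hle ?_
      have h1 := hdim _ le_rfl hU1 hU0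
      rw [← hdim U' hle hst h0] at h1
      exact (Nat.eq_of_mul_eq_mul_left hp.pos h1).symm

theorem isCyclic_algEquiv_of_isField {k E : Type*} [Field k] [CommRing E] [Algebra k E] [Finite E]
    (h : IsField E) : IsCyclic (E ≃ₐ[k] E) := by
  let := h.toField
  exact (inferInstance : IsCyclic Gal(E/k))

theorem pow_card_of_isField {E V : Type*} [CommRing E] [Finite E] [AddCommGroup V] [Module E V]
    [Finite V] (h : IsField E) (x : E) : x ^ Nat.card V = x := by
  let := h.toField
  cases nonempty_fintype E
  rw [Module.natCard_eq_pow_finrank (K := E), Nat.card_eq_fintype_card]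
  exact FiniteField.pow_card_pow _ x

theorem field_case {p : ℕ} (hp : p.Prime) {k G V E : Type*} [Field k] [Finite k] [Group G]
    [Finite G] (hG : IsPGroup p G) [AddCommGroup V] [Module k V] [FiniteDimensional k V]
    [Nontrivial V] (ρ : Representation k G V) (hfaith : Function.Injective ρ)
    (hpq : ¬ p ∣ Nat.card k)
    (A : Subgroup G) (hA : A.Normal) (hself : ∀ g : G, (∀ x ∈ A, g * x = x * g) → g ∈ A)
    [CommRing E] [Algebra k E] [Module E V] [IsScalarTower k E V] [FaithfulSMul E V]
    (Θ : G → E →ₐ[k] E) (hΘ : ∀ g x v, ρ g (x • v) = Θ g x • ρ g v)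
    (ε : A → E) (hε : ∀ x v, ε x • v = ρ x v) (hE : IsField E) :
    (Psi p)^[(Module.finrank k V).factorization p + Nat.log p (Nat.card k ^ p)]
      (⊤ : Subgroup G) = ⊥ := by
  have : Fact p.Prime := ⟨hp⟩
  have hVfin : Finite V := Module.finite_of_finite k
  have hEfin : Finite E := by
    refine Finite.of_injective (fun x : E => fun v : V => x • v) fun x y h => ?_
    exact FaithfulSMul.eq_of_smul_eq_smul fun v : V => congrFun h v
  have hext : ∀ x y : E, (∀ v : V, x • v = y • v) → x = y := fun x y h =>
    FaithfulSMul.eq_of_smul_eq_smul h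
  have hinv : ∀ g v, ρ g (ρ g⁻¹ v) = v := fun g v => by
    rw [← Module.End.mul_apply, ← map_mul]; simp
  have hΘmul : ∀ g h x, Θ (g * h) x = Θ g (Θ h x) := by
    intro g h x
    apply hext
    intro v
    rw [← hinv (g * h) v, ← hΘ, map_mul, Module.End.mul_apply, Module.End.mul_apply, hΘ, hΘ]
  have hΘone : ∀ x, Θ 1 x = x := by
    intro x
    apply hext
    intro v
    have := hΘ 1 x v
    simpa using this.symm
  let Γ : G →* (E ≃ₐ[k] E) :=
    { toFun := fun g => AlgEquiv.ofAlgHom (Θ g) (Θ g⁻¹)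
        (by ext x; simp [← hΘmul, hΘone]) (by ext x; simp [← hΘmul, hΘone])
      map_one' := by ext x; simp [hΘone]
      map_mul' := fun g h => by ext x; simp [hΘmul] }
  have hΓ : ∀ g x, Γ g x = Θ g x := fun g x => rfl
  have hker : ∀ g, Γ g = 1 → g ∈ A := by
    intro g hg
    apply hself
    intro x hx
    apply hfaith
    ext v
    have h1 : Θ g (ε ⟨x, hx⟩) = ε ⟨x, hx⟩ := by rw [← hΓ, hg]; rfl
    have h2 := hΘ g (ε ⟨x, hx⟩) v
    rw [h1, hε, hε] at h2
    simpa using h2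
  have := isCyclic_algEquiv_of_isField (k := k) hE
  obtain ⟨⟨_, b, rfl⟩, hb⟩ := (inferInstance : IsCyclic Γ.range).exists_generator
  have hdom : IsDomain E := hE.isDomain
  let ε' : A →* E :=
    { toFun := ε
      map_one' := hext _ _ fun v => by rw [hε]; simp
      map_mul' := fun x y => hext _ _ fun v => by
        rw [hε, mul_smul, hε, hε]; simp }
  have hεinj : Function.Injective ε' := by
    intro x y hxy
    apply Subtype.ext
    apply hfaith
    ext v
    rw [← hε, ← hε]
    exact congrArg (· • v) hxy
  have hcyc : IsCyclic A := isCyclic_of_subgroup_isDomain ε' hεinj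
  obtain ⟨a, ha⟩ := hcyc.exists_generator
  have hAz : A = Subgroup.zpowers (a : G) := by
    ext x
    constructor
    · intro hx
      obtain ⟨i, hi⟩ := ha ⟨x, hx⟩
      exact ⟨i, congrArg Subtype.val hi⟩
    · rintro ⟨i, rfl⟩
      exact A.zpow_mem a.2 i
  obtain ⟨m, hm⟩ := IsPGroup.iff_orderOf.1 hG (a : G)
  have hbase := group_base hp hG A hA hself a b hAz m hm (by
    intro g
    obtain ⟨j, hj⟩ := hb ⟨Γ g, g, rfl⟩
    refine ⟨g * (b ^ j)⁻¹, hker _ ?_, j, by group⟩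
    have : Γ b ^ j = Γ g := congrArg Subtype.val hj
    rw [map_mul, map_inv, map_zpow, this, mul_inv_cancel])
  have hcard : Nat.card V = Nat.card k ^ Module.finrank k V := Module.natCard_eq_pow_finrank
  have hpos : 0 < Module.finrank k V := Module.finrank_pos
  have hq2 : 2 ≤ Nat.card k := Finite.one_lt_card
  have hone : 1 ≤ Nat.card k ^ Module.finrank k V := Nat.one_le_pow _ _ (by omega)
  have hdvd : p ^ m ∣ Nat.card k ^ Module.finrank k V - 1 := by
    rw [← hm, Subgroup.orderOf_coe, ← hcard]
    apply orderOf_dvd_of_pow_eq_one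
    have h1 : a ^ Nat.card V = a := by
      apply hεinj
      rw [map_pow]
      exact pow_card_of_isField hE _
    rw [hcard] at h1 ⊢
    have h2 : a ^ (Nat.card k ^ Module.finrank k V - 1) * a = 1 * a := by
      rw [← pow_succ, Nat.sub_add_cancel hone, h1, one_mul]
    exact mul_right_cancel h2
  have hle := arith_bound hp hq2 hpq hpos hdvd
  obtain ⟨c, hc⟩ := Nat.exists_eq_add_of_le hle
  rw [hc, add_comm, Function.iterate_add_apply, hbase, eq_bot_iff]
  clear hc
  induction c with
  | zero => exact le_rfl
  | succ c ih =>
    rw [Function.iterate_succ_apply']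
    exact (Psi_le_self _).trans ih

theorem dichotomy {p : ℕ} (hp : p.Prime) {k G V : Type*} [Field k] [Finite k] [Group G]
    [Finite G] (hG : IsPGroup p G) [AddCommGroup V] [Module k V] [FiniteDimensional k V]
    (ρ : Representation k G V) (hfaith : Function.Injective ρ)
    (hirr : ρ.IsIrreducibleRep) (hpq : ¬ p ∣ Nat.card k) :
    (Psi p)^[(Module.finrank k V).factorization p + Nat.log p (Nat.card k ^ p)]
      (⊤ : Subgroup G) = ⊥ ∨ ∃ H : Subgroup G, H.Normal ∧ H.index = p ∧ ∃ U : Submodule k V,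
      (∀ h ∈ H, ∀ u ∈ U, ρ h u ∈ U) ∧ U ≠ ⊥ ∧ p * Module.finrank k U = Module.finrank k V ∧
      ∀ U' : Submodule k V, U' ≤ U → (∀ h ∈ H, ∀ u ∈ U', ρ h u ∈ U') → U' = ⊥ ∨ U' = U := by
  obtain ⟨A, hA, hAc, hself⟩ := exists_self_centralizing hp hG
  have hnt := hirr.1
  let s : Set (Module.End k V) := ρ '' A
  have hs : ∀ x ∈ s, ∀ y ∈ s, x * y = y * x := by
    rintro _ ⟨x, hx, rfl⟩ _ ⟨y, hy, rfl⟩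
    rw [← map_mul, ← map_mul, hAc x hx y hy]
  let E := Algebra.adjoin k s
  let instE : CommRing E := Algebra.adjoinCommRingOfComm k hs
  have hgg : ∀ g, ρ g * ρ g⁻¹ = 1 := fun g => by rw [← map_mul]; simp
  have hgg' : ∀ g, ρ g⁻¹ * ρ g = 1 := fun g => by rw [← map_mul]; simp
  let c : G → Module.End k V →ₐ[k] Module.End k V := fun g =>
    AlgHom.ofLinearMap
      ((LinearMap.mulLeft k (ρ g)).comp (LinearMap.mulRight k (ρ g⁻¹)))
      (by simp [hgg])
      (by
        intro x y
        simp only [LinearMap.comp_apply, LinearMap.mulLeft_apply, LinearMap.mulRight_apply]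
        calc ρ g * (x * y * ρ g⁻¹) = ρ g * x * 1 * y * ρ g⁻¹ := by simp only [mul_assoc, one_mul]
          _ = _ := by rw [← hgg' g]; simp only [mul_assoc])
  have hc : ∀ g x, c g x = ρ g * (x * ρ g⁻¹) := fun g x => rfl
  have hcE : ∀ g, ∀ x ∈ E, c g x ∈ E := by
    intro g
    have : E ≤ E.comap (c g) := by
      refine Algebra.adjoin_le ?_
      rintro _ ⟨x, hx, rfl⟩
      refine Algebra.subset_adjoin ⟨g * x * g⁻¹, hA.conj_mem x hx g, ?_⟩
      simp [hc, mul_assoc]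
    exact this
  let Θ : G → E →ₐ[k] E := fun g =>
    ((c g).comp E.val).codRestrict E (fun x => hcE g x x.2)
  have hΘ : ∀ g (x : E) (v : V), ρ g (x • v) = Θ g x • ρ g v := by
    intro g x v
    change ρ g (x.1 v) = (c g x.1) (ρ g v)
    rw [hc]
    simp only [Module.End.mul_apply]
    rw [← Module.End.mul_apply (ρ g⁻¹) (ρ g), hgg', Module.End.one_apply]
  have hfs : FaithfulSMul E V := ⟨fun {x y} h => Subtype.ext (LinearMap.ext h)⟩
  rcases clifford hp hG ρ hirr (E := E) (fun g => Θ g) hΘ with hE | h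
  · left
    exact field_case hp hG ρ hfaith hpq A hA hself (E := E) Θ hΘ
      (fun x => ⟨ρ x, Algebra.subset_adjoin ⟨x, x.2, rfl⟩⟩) (fun x v => rfl) hE
  · exact Or.inr h

theorem main_ind.{u, v, w} {p : ℕ} (hp : p.Prime) {k : Type u} [Field k] [Finite k]
    (hpq : ¬ p ∣ Nat.card k) (n : ℕ) : ∀ (G : Type v) [Group G] [Finite G] (_ : IsPGroup p G)
    (V : Type w) [AddCommGroup V] [Module k V] [FiniteDimensional k V]
    (ρ : Representation k G V) (_ : ρ.IsIrreducibleRep) (_ : Module.finrank k V = n),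
    ∀ g ∈ (Psi p)^[n.factorization p + Nat.log p (Nat.card k ^ p)] (⊤ : Subgroup G), ρ g = 1 := by
  induction n using Nat.strong_induction_on with
  | _ n ih =>
  -- the faithful case
  have hf : ∀ (G : Type v) [Group G] [Finite G] (_ : IsPGroup p G)
      (V : Type w) [AddCommGroup V] [Module k V] [FiniteDimensional k V]
      (ρ : Representation k G V) (_ : Function.Injective ρ) (_ : ρ.IsIrreducibleRep)
      (_ : Module.finrank k V = n),
      ∀ g ∈ (Psi p)^[n.factorization p + Nat.log p (Nat.card k ^ p)] (⊤ : Subgroup G),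
        ρ g = 1 := by
    intro G _ _ hG V _ _ _ ρ hfaith hirr hn g hg
    rcases dichotomy hp hG ρ hfaith hirr hpq with h | ⟨H, hHn, hHi, U, hHU, hU0, hdim, hUirr⟩
    · rw [hn] at h
      rw [h, Subgroup.mem_bot] at hg
      rw [hg, map_one]
    · have hUnt : Nontrivial U := (Submodule.nontrivial_iff_ne_bot).2 hU0
      have hUpos : 0 < Module.finrank k U := Module.finrank_pos
      have hlt : Module.finrank k U < n := by
        rw [← hn, ← hdim]
        exact lt_mul_of_one_lt_left hUpos hp.one_lt
      have hfac : n.factorization p = (Module.finrank k U).factorization p + 1 := by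
        rw [← hn, ← hdim, Nat.factorization_mul hp.ne_zero hUpos.ne', Finsupp.add_apply,
          hp.factorization_self, add_comm]
      let σ : Representation k H U :=
        { toFun := fun h => (ρ h).restrict (fun u hu => hHU h h.2 u hu)
          map_one' := by ext u; simp
          map_mul' := fun x y => by ext u; simp }
      have hσ : ∀ (h : H) (u : U), ((σ h u : U) : V) = ρ h u := fun h u => rfl
      have hσirr : σ.IsIrreducibleRep := by
        refine ⟨hUnt, fun W hW => ?_⟩
        have := hUirr (W.map U.subtype) (Submodule.map_subtype_le U W) ?_
        · rcases this with h | h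
          · left
            rw [eq_bot_iff]
            intro w hw
            have hw2 : (w : V) ∈ W.map U.subtype := ⟨w, hw, rfl⟩
            rw [h, Submodule.mem_bot] at hw2
            rw [Submodule.mem_bot]
            exact Subtype.ext hw2
          · right
            rw [eq_top_iff]
            intro x _
            have hx : (x : V) ∈ W.map U.subtype := by rw [h]; exact x.2
            obtain ⟨y, hy, hyx⟩ := hx
            have : y = x := Subtype.ext hyx
            exact this ▸ hy
        · rintro h hh _ ⟨w, hw, rfl⟩
          exact ⟨σ ⟨h, hh⟩ w, hW ⟨h, hh⟩ ⟨w, hw, rfl⟩, rfl⟩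
      have hIH := ih _ hlt H (hG.to_subgroup H) U σ hσirr rfl
      set r := (Module.finrank k U).factorization p + Nat.log p (Nat.card k ^ p) with hr
      let P := (Psi p)^[r] H
      have hPn : P.Normal := Psi_iterate_normal hHn r
      have hgP : g ∈ P := by
        rw [hfac, show (Module.finrank k U).factorization p + 1 + Nat.log p (Nat.card k ^ p) = r + 1
          by omega, Function.iterate_succ_apply] at hg
        exact (Psi_mono.iterate r) (Psi_top_le hp H hHi) hg
      have hPU : ∀ x ∈ P, ∀ u ∈ U, ρ x u = u := by
        intro x hx u hu
        have h1 := map_Psi_iterate (p := p) H.subtype r ⊤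
        rw [← MonoidHom.range_eq_map, Subgroup.range_subtype] at h1
        have hx' : x ∈ (Psi p)^[r] H := hx
        rw [← h1] at hx'
        obtain ⟨y, hy, rfl⟩ := hx'
        have h2 := hIH y hy
        have h3 := hσ y ⟨u, hu⟩
        rw [h2] at h3
        exact h3.symm
      let W : Submodule k V :=
        { carrier := {v | ∀ x ∈ P, ρ x v = v}
          add_mem' := fun {v w} hv hw x hx => by rw [map_add, hv x hx, hw x hx]
          zero_mem' := fun x _ => map_zero _
          smul_mem' := fun c v hv x hx => by rw [map_smul, hv x hx] }
      have hW : W = ⊤ := by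
        refine (hirr.2 W ?_).resolve_left ?_
        · rintro y _ ⟨v, hv, rfl⟩ x hx
          have h1 := hv (y⁻¹ * x * y) (by simpa using hPn.conj_mem x hx y⁻¹)
          conv_rhs => rw [← h1]
          rw [← Module.End.mul_apply, ← Module.End.mul_apply, ← map_mul, ← map_mul]
          congr 2
          group
        · intro h
          apply hU0
          rw [eq_bot_iff, ← h]
          exact fun u hu x hx => hPU x hx u hu
      ext v
      have hv : v ∈ W := hW ▸ Submodule.mem_top
      exact hv g hgP
  intro G _ _ hG V _ _ _ ρ hirr hn g hg
  let K : Subgroup G := MonoidHom.ker ρ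
  let σ : Representation k (G ⧸ K) V :=
    QuotientGroup.lift K ρ fun _ hg => MonoidHom.mem_ker.1 hg
  have hσ : ∀ g : G, σ (QuotientGroup.mk' K g) = ρ g := fun g => rfl
  have hσirr : σ.IsIrreducibleRep :=
    ⟨hirr.1, fun W hW => hirr.2 W fun g => by
      have hg2 := hW (QuotientGroup.mk' K g)
      rw [hσ] at hg2
      exact hg2⟩
  have hσinj : Function.Injective σ := by
    intro x y
    obtain ⟨a, rfl⟩ := QuotientGroup.mk'_surjective K x
    obtain ⟨b, rfl⟩ := QuotientGroup.mk'_surjective K y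
    intro hab
    rw [hσ, hσ] at hab
    refine QuotientGroup.eq.2 (MonoidHom.mem_ker.2 ?_)
    rw [map_mul, ← hab, ← map_mul, inv_mul_cancel, map_one]
  rw [← hσ]
  refine hf (G ⧸ K) (hG.to_quotient K) V σ hσinj hσirr hn _ ?_
  have h1 := map_Psi_iterate (p := p) (QuotientGroup.mk' K)
    (n.factorization p + Nat.log p (Nat.card k ^ p)) ⊤
  rw [Subgroup.map_top_of_surjective _ (QuotientGroup.mk'_surjective K)] at h1
  rw [← h1]
  exact ⟨g, hg, rfl⟩

/-- If a finite `p`-group `G` has a faithful irreducible representation on an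
`N`-dimensional vector space over a finite field `k` with `q` elements and
`char k ≠ p`, then `𝓕(G) ≤ ν_p(N) + p · log_p q` (as real numbers). -/
theorem frattiniLength_le_of_faithful_irreducible_finiteField (p : ℕ) (hp : p.Prime)
    (k : Type*) [Field k] [Fintype k] (q : ℕ) (hq : Fintype.card k = q)
    (hchar : ringChar k ≠ p)
    (G : Type*) [Group G] [Finite G] (hG : IsPGroup p G)
    (V : Type*) [AddCommGroup V] [Module k V] [FiniteDimensional k V]
    (ρ : Representation k G V) (hfaith : Function.Injective ρ)
    (hirr : ρ.IsIrreducibleRep)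
    (N : ℕ) (hN1 : 1 ≤ N) (hN : Module.finrank k V = N) :
    (frattiniLength G : ℝ) ≤ (N.factorization p : ℝ) + p * Real.logb p q := by
  have hcard : Nat.card k = q := by rw [Nat.card_eq_fintype_card, hq]
  have hpq : ¬ p ∣ Nat.card k := by
    intro h
    have := CharP.exists k
    obtain ⟨ℓ, hℓ⟩ := this
    obtain ⟨n, hℓp, hn⟩ := FiniteField.card k ℓ
    rw [Nat.card_eq_fintype_card, hn] at h
    have h1 := (Nat.prime_dvd_prime_iff_eq hp hℓp).1 (hp.dvd_of_dvd_pow h)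
    exact hchar ((ringChar.eq k ℓ).trans h1.symm)
  have hbot : frattiniSeries G (N.factorization p + Nat.log p (q ^ p)) = ⊥ := by
    rw [eq_bot_iff]
    refine (frattiniSeries_le hp _).trans ?_
    intro g hg
    rw [← hcard] at hg
    have := main_ind hp hpq N G hG V ρ hirr hN g hg
    rw [Subgroup.mem_bot]
    apply hfaith
    rw [this, map_one]
  have hle : frattiniLength G ≤ N.factorization p + Nat.log p (q ^ p) := Nat.sInf_le hbot
  have h2 : (Nat.log p (q ^ p) : ℝ) ≤ p * Real.logb p q := by
    have := Real.natLog_le_logb (q ^ p) p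
    rwa [Nat.cast_pow, Real.logb_pow] at this
  calc (frattiniLength G : ℝ) ≤ ((N.factorization p + Nat.log p (q ^ p) : ℕ) : ℝ) := by
        exact_mod_cast hle
    _ = (N.factorization p : ℝ) + (Nat.log p (q ^ p) : ℝ) := by push_cast; rfl
    _ ≤ _ := by gcongr
end

section
/- Let p be a prime, K an algebraically closed field, d ≥ 1, and let x_1, …, x_m ∈ (K^×)^d and E_1, …, E_m be subgroups of the group (K^×)^d. For j ∈ ℕ let a_j = |μ(p^j)^d ∩ ⋃_{i=1}^m x_i E_i| (a natural number, since μ(p^j)^d is finite). Then there exists an integer z ∈ ℤ such that the sequence (a_j), viewed in the p-adic integers ℤ_p, converges to z as j → ∞. -/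
open Filter Pointwise

namespace PadicCount

def Conv (p : ℕ) [Fact p.Prime] {G : Type*} [CommGroup G] (S : Set G) : Prop :=
  ∃ z : ℤ, Tendsto (fun j : ℕ => ((({g : G | g ^ (p ^ j) = 1} ∩ S).ncard : ℕ) : ℤ_[p])) atTop
    (nhds ((z : ℤ_[p])))

def Cos {G : Type*} [CommGroup G] (S : Set G) : Prop :=
  S = ∅ ∨ ∃ (y : G) (E : Subgroup G), S = y • (E : Set G)

lemma coset_eq {G : Type*} [CommGroup G] {y z : G} {E : Subgroup G}
    (h : z ∈ y • (E : Set G)) : y • (E : Set G) = z • (E : Set G) := by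
  rw [leftCoset_eq_iff]
  rwa [mem_leftCoset_iff] at h

lemma Cos.inter {G : Type*} [CommGroup G] {S T : Set G} (hS : Cos S) (hT : Cos T) :
    Cos (S ∩ T) := by
  rcases Set.eq_empty_or_nonempty (S ∩ T) with h | ⟨z, hzS, hzT⟩
  · exact Or.inl h
  rcases hS with rfl | ⟨y, E, rfl⟩
  · simp at hzS
  rcases hT with rfl | ⟨w, F, rfl⟩
  · simp at hzT
  right
  refine ⟨z, E ⊓ F, ?_⟩
  rw [coset_eq hzS, coset_eq hzT, Subgroup.coe_inf, Set.smul_set_inter]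

lemma conv_of_eventually {p : ℕ} [Fact p.Prime] {u : ℕ → ℕ} (hmono : Monotone u)
    (hu : ∀ j, ∃ n, u j = p ^ n) :
    ∃ z : ℤ, Tendsto (fun j => (u j : ℤ_[p])) atTop (nhds (z : ℤ_[p])) := by
  have hp : p.Prime := Fact.out
  choose n hn using hu
  have hnm : Monotone n := by
    intro i j hij
    have := hmono hij
    rw [hn, hn] at this
    exact (Nat.pow_le_pow_iff_right hp.one_lt).1 this
  rcases tendsto_atTop_of_monotone hnm with h | ⟨l, h⟩
  · refine ⟨0, ?_⟩
    have h0 : Tendsto (fun k : ℕ => (p : ℤ_[p]) ^ k) atTop (nhds 0) := by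
      apply tendsto_pow_atTop_nhds_zero_of_norm_lt_one
      rw [PadicInt.norm_p]
      exact inv_lt_one_of_one_lt₀ (by exact_mod_cast hp.one_lt)
    have := h0.comp h
    simpa [hn, Function.comp_def] using this
  · refine ⟨(p ^ l : ℕ), ?_⟩
    rw [nhds_discrete, tendsto_pure] at h
    apply tendsto_const_nhds.congr'
    filter_upwards [h] with j hj
    simp [hn, hj]

lemma Cos.conv {p : ℕ} [Fact p.Prime] {G : Type*} [CommGroup G]
    (hfin : ∀ j, {g : G | g ^ (p ^ j) = 1}.Finite) {S : Set G} (hS : Cos S) : Conv p S := by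
  have hzero : (∀ j, {g : G | g ^ (p ^ j) = 1} ∩ S = ∅) → Conv p S := by
    intro h
    refine ⟨0, ?_⟩
    simp [h]
  by_cases h : ∀ j, {g : G | g ^ (p ^ j) = 1} ∩ S = ∅
  · exact hzero h
  push Not at h
  obtain ⟨j0, z, hz, hzS⟩ := h
  rcases hS with rfl | ⟨y, E, rfl⟩
  · simp at hzS
  rw [coset_eq hzS]
  let H : ℕ → Subgroup G := fun j => (powMonoidHom (p ^ j) : G →* G).ker ⊓ E
  have hH : ∀ j, (H j : Set G) = {g : G | g ^ (p ^ j) = 1} ∩ E := by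
    intro j; ext g; simp [H, MonoidHom.mem_ker]
  have hHf : ∀ j, (H j : Set G).Finite := fun j => by
    rw [hH]; exact (hfin j).inter_of_left _
  have hmono : Monotone (fun j => (H j : Set G).ncard) := by
    intro i j hij
    refine Set.ncard_le_ncard ?_ (hHf j)
    rw [hH, hH]
    refine Set.inter_subset_inter_left _ ?_
    intro g hg
    obtain ⟨c, hc⟩ := pow_dvd_pow p hij
    simp only [Set.mem_setOf_eq] at hg ⊢
    rw [hc, pow_mul, hg, one_pow]
  obtain ⟨w, hw⟩ := conv_of_eventually (p := p) hmono (by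
    intro j
    haveI : Finite (H j) := (hHf j).to_subtype
    have hP : IsPGroup p (H j) := by
      rintro ⟨g, hg⟩
      refine ⟨j, ?_⟩
      have : g ∈ (H j : Set G) := hg
      rw [hH] at this
      exact Subtype.ext this.1
    obtain ⟨n, hn⟩ := IsPGroup.iff_card.1 hP
    exact ⟨n, by rw [← hn]; rfl⟩)
  refine ⟨w, hw.congr' ?_⟩
  filter_upwards [eventually_ge_atTop j0] with j hj
  have hzj : z ^ (p ^ j) = 1 := by
    obtain ⟨c, hc⟩ := pow_dvd_pow p hj
    have hz' : z ^ (p ^ j0) = 1 := hz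
    rw [hc, pow_mul, hz', one_pow]
  have : {g : G | g ^ (p ^ j) = 1} ∩ z • (E : Set G) = (fun g => z * g) '' (H j : Set G) := by
    rw [hH]
    ext g
    constructor
    · rintro ⟨h1, e, he, rfl⟩
      refine ⟨e, ⟨?_, he⟩, rfl⟩
      simpa [mul_pow, hzj] using h1
    · rintro ⟨e, ⟨h1, he⟩, rfl⟩
      refine ⟨?_, e, he, rfl⟩
      have h1' : e ^ (p ^ j) = 1 := h1
      simp [mul_pow, hzj, h1']
  rw [this, Set.ncard_image_of_injective _ (mul_right_injective z)]

lemma conv_union {p : ℕ} [Fact p.Prime] {G : Type*} [CommGroup G]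
    (hfin : ∀ j, {g : G | g ^ (p ^ j) = 1}.Finite) {S T : Set G}
    (hS : Conv p S) (hT : Conv p T) (hST : Conv p (S ∩ T)) : Conv p (S ∪ T) := by
  obtain ⟨a, ha⟩ := hS
  obtain ⟨b, hb⟩ := hT
  obtain ⟨c, hc⟩ := hST
  refine ⟨a + b - c, ?_⟩
  push_cast
  refine ((ha.add hb).sub hc).congr ?_
  intro j
  have := Set.ncard_union_add_ncard_inter ({g : G | g ^ (p ^ j) = 1} ∩ S)
    ({g : G | g ^ (p ^ j) = 1} ∩ T) ((hfin j).inter_of_left _) ((hfin j).inter_of_left _)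
  rw [← Set.inter_union_distrib_left, ← Set.inter_inter_distrib_left] at this
  rw [sub_eq_iff_eq_add]
  exact_mod_cast this.symm

lemma conv_biUnion {p : ℕ} [Fact p.Prime] {G : Type*} [CommGroup G]
    (hfin : ∀ j, {g : G | g ^ (p ^ j) = 1}.Finite) {ι : Type*} (s : Finset ι) :
    ∀ f : ι → Set G, (∀ i, Cos (f i)) → Conv p (⋃ i ∈ s, f i) := by
  classical
  induction s using Finset.induction_on with
  | empty => intro f _; exact Cos.conv hfin (Or.inl (by simp))
  | insert i s _ ih =>
    intro f hf
    rw [Finset.set_biUnion_insert]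
    refine conv_union hfin ((hf i).conv hfin) (ih f hf) ?_
    rw [Set.inter_iUnion₂]
    exact ih _ (fun k => (hf i).inter (hf k))

end PadicCount

/-- Let `K` be an algebraically closed field, `d ≥ 1`, `x₁, …, x_m ∈ (Kˣ)^d` and
`E₁, …, E_m` subgroups of `(Kˣ)^d`.  The number `a j` of points of `μ(p^j)^d` lying
in `⋃ᵢ xᵢEᵢ` converges `p`-adically to an integer as `j → ∞`. -/
theorem padic_limit_count_roots_of_unity_in_cosets (p : ℕ) (hp : Fact p.Prime)
    (K : Type*) [Field K] [IsAlgClosed K] (d : ℕ) (hd : 1 ≤ d) (m : ℕ)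
    (x : Fin m → (Fin d → Kˣ)) (E : Fin m → Subgroup (Fin d → Kˣ))
    (a : ℕ → ℕ)
    (ha : ∀ j, a j =
      ({ζ : Fin d → Kˣ | ∀ t, ζ t ^ (p ^ j) = 1} ∩
        ⋃ i, x i • (E i : Set (Fin d → Kˣ))).ncard) :
    ∃ z : ℤ, Tendsto (fun j => (a j : ℤ_[p])) atTop (nhds ((z : ℤ_[p]))) := by
  have hset : ∀ j, {ζ : Fin d → Kˣ | ∀ t, ζ t ^ (p ^ j) = 1} = {g | g ^ (p ^ j) = 1} := by
    intro j; ext g; simp [funext_iff]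
  have hfin : ∀ j, {g : Fin d → Kˣ | g ^ (p ^ j) = 1}.Finite := by
    intro j
    rw [← hset]
    haveI : NeZero (p ^ j) := ⟨pow_ne_zero _ hp.out.ne_zero⟩
    have h0 : Finite (rootsOfUnity (p ^ j) K) := inferInstance
    have h1 : {u : Kˣ | u ^ (p ^ j) = 1}.Finite :=
      @Set.toFinite _ ((rootsOfUnity (p ^ j) K : Subgroup Kˣ) : Set Kˣ) h0
    exact Set.Finite.pi' (fun _ => h1)
  obtain ⟨z, hz⟩ := PadicCount.conv_biUnion hfin (Finset.univ : Finset (Fin m))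
    (fun i => x i • (E i : Set (Fin d → Kˣ))) (fun i => Or.inr ⟨x i, E i, rfl⟩)
  refine ⟨z, hz.congr ?_⟩
  intro j
  rw [ha, hset]
  simp
end

section
/- Let p be a prime, K an algebraically closed field with char(K) ≠ p, and G a finite p-group. Then every irreducible representation of G on a finite-dimensional K-vector space V has dimension a power of p, i.e. dim_K V = p^j for some j ∈ ℕ. -/
open Module in
theorem irr_pgroup_aux (p : ℕ) (hp : p.Prime)
    (K : Type*) [Field K] [IsAlgClosed K] (n : ℕ) : ∀
    (G : Type*) [Group G] [Finite G] (_ : IsPGroup p G) (_ : Nat.card G = n)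
    (V : Type*) [AddCommGroup V] [Module K V] [FiniteDimensional K V]
    (ρ : Representation K G V) (_ : ρ.IsIrreducibleRep),
    ∃ j : ℕ, Module.finrank K V = p ^ j := by
  induction n using Nat.strong_induction_on with
  | _ n ih =>
  intro G _ _ hG hn V _ _ _ ρ hirr
  have := Fact.mk hp
  obtain ⟨hnt, hirr⟩ := hirr
  have hinv1 : ∀ (g : G) v, ρ g (ρ g⁻¹ v) = v := fun g v => by simp
  have hinv2 : ∀ (g : G) v, ρ g⁻¹ (ρ g v) = v := fun g v => by simp
  have hmul : ∀ (g h : G) v, ρ (g * h) v = ρ g (ρ h v) := fun g h v => by simp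
  have hne : ∀ (g : G) {v}, v ≠ 0 → ρ g v ≠ 0 := fun g v hv h => hv (by
    rw [← hinv2 g v, h, map_zero])
  let Z : Subgroup G :=
    { carrier := {g | ∃ c : K, ∀ v, ρ g v = c • v}
      one_mem' := ⟨1, by simp⟩
      mul_mem' := by
        rintro a b ⟨c, hc⟩ ⟨d, hd⟩
        exact ⟨c * d, fun v => by rw [hmul, hd, hc, smul_smul]⟩
      inv_mem' := by
        rintro a ⟨c, hc⟩
        refine ⟨c⁻¹, fun v => ?_⟩
        have h1 := hinv1 a v
        rw [hc] at h1
        by_cases h0 : c = 0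
        · subst h0
          rw [← h1]; simp
        · rw [eq_inv_smul_iff₀ h0, h1] }
  have hZmem : ∀ g, g ∈ Z ↔ ∃ c : K, ∀ v, ρ g v = c • v := fun g => Iff.rfl
  have hZn : Z.Normal := ⟨by
    rintro a ⟨c, hc⟩ g
    refine ⟨c, fun v => ?_⟩
    rw [hmul, hmul, hc, map_smul, hinv1]⟩
  by_cases hZ : Z = ⊤
  · -- all elements act by scalars
    refine ⟨0, ?_⟩
    obtain ⟨v, hv⟩ := exists_ne (0 : V)
    have := hirr (K ∙ v) (fun g => by
      obtain ⟨c, hc⟩ := (hZmem g).1 (by rw [hZ]; trivial)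
      rintro _ ⟨w, hw, rfl⟩
      rw [hc]
      exact Submodule.smul_mem _ _ hw)
    rcases this with h | h
    · simp [hv] at h
    · rw [pow_zero, ← finrank_top, ← h, finrank_span_singleton hv]
  have hQ : Nontrivial (G ⧸ Z) := by
    rwa [QuotientGroup.nontrivial_iff]
  have hQp : IsPGroup p (G ⧸ Z) := hG.to_quotient Z
  have := hQp.center_nontrivial
  obtain ⟨⟨q, hq⟩, hq1⟩ := exists_ne (1 : Subgroup.center (G ⧸ Z))
  obtain ⟨a, rfl⟩ := QuotientGroup.mk_surjective q
  have haZ : a ∉ Z := fun h => hq1 (by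
    ext
    simpa using h)
  have hcomm : ∀ g, ∃ d : K, ∀ v, ρ a (ρ g v) = d • ρ g (ρ a v) := by
    intro g
    have h1 : ((g * a : G) : G ⧸ Z) = ((a * g : G) : G ⧸ Z) := by
      simpa using Subgroup.mem_center_iff.1 hq (g : G ⧸ Z)
    rw [QuotientGroup.eq] at h1
    obtain ⟨c, hc⟩ := h1
    refine ⟨c, fun v => ?_⟩
    have h2 : ρ (a * g) v = ρ (g * a) (ρ ((g * a)⁻¹ * (a * g)) v) := by
      rw [← hmul, mul_inv_cancel_left]
    rw [hc, map_smul, hmul, hmul] at h2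
    exact h2
  choose d hd using hcomm
  obtain ⟨v0, hv0⟩ := exists_ne (0 : V)
  let D0 : G →* K :=
    { toFun := d
      map_one' := by
        have := hd 1 v0
        simp only [map_one, Module.End.one_apply] at this
        exact (smul_left_injective K (hne a hv0) (by simpa using this)).symm
      map_mul' := fun g h => by
        have h1 := hd (g * h) v0
        rw [hmul, hd, hd, map_smul, smul_smul, ← hmul] at h1
        exact (smul_left_injective K (hne _ (hne a hv0)) h1).symm }
  let D : G →* Kˣ := D0.toHomUnits
  have hD : ∀ g, (D g : K) = d g := fun g => rfl
  obtain ⟨l, hl⟩ := Module.End.exists_eigenvalue (ρ a)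
  obtain ⟨w0, hw0⟩ := hl.exists_hasEigenvector
  have hl0 : l ≠ 0 := by
    rintro rfl
    have := hw0.apply_eq_smul
    exact hne a hw0.2 (by simpa using this)
  have hmapE : ∀ g m v, v ∈ End.eigenspace (ρ a) m → ρ g v ∈ End.eigenspace (ρ a) (d g * m) := by
    intro g m v hv
    rw [End.mem_eigenspace_iff] at hv ⊢
    rw [hd, hv, map_smul, smul_smul]
  let A : D.range → Submodule K V := fun i => End.eigenspace (ρ a) ((i : Kˣ) * l)
  have hAind : iSupIndep A := by
    refine (End.eigenspaces_iSupIndep (ρ a)).comp (f := fun i : D.range => ((i : Kˣ) : K) * l) ?_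
    intro i j hij
    exact Subtype.ext (Units.ext (mul_right_cancel₀ hl0 hij))
  have hAtop : iSup A = ⊤ := by
    refine (hirr (iSup A) ?_).resolve_left ?_
    · intro g
      rw [Submodule.map_iSup]
      refine iSup_le fun i => ?_
      refine le_trans ?_ (le_iSup A (⟨D g, g, rfl⟩ * i))
      rintro _ ⟨v, hv, rfl⟩
      have := hmapE g _ _ hv
      simpa [A, hD, mul_assoc] using this
    · intro h
      have h1 : w0 ∈ iSup A := (le_iSup A 1) (by simpa [A] using hw0.1)
      rw [h] at h1
      exact hw0.2 (by simpa using h1)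
  have hAdim : ∀ i, finrank K (A i) = finrank K (End.eigenspace (ρ a) l) := by
    rintro ⟨_, g, rfl⟩
    have key : ∀ g m, finrank K (End.eigenspace (ρ a) m) ≤
        finrank K (End.eigenspace (ρ a) (d g * m)) := by
      intro g m
      refine LinearMap.finrank_le_finrank_of_injective
        (f := (ρ g).restrict (hmapE g m)) ?_
      intro x y hxy
      have h2 : ρ g x = ρ g y := congrArg Subtype.val hxy
      exact Subtype.ext (by rw [← hinv2 g x, h2, hinv2])
    apply le_antisymm
    · have h1 := key g⁻¹ (d g * l)
      have h2 : d g⁻¹ * (d g * l) = l := by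
        rw [← mul_assoc, ← hD, ← hD, map_inv, Units.inv_mul, one_mul]
      rw [h2] at h1
      exact h1
    · exact key g l
  have : Finite D.range := Set.finite_range D
  have := Fintype.ofFinite D.range
  classical
  have hAint := DirectSum.isInternal_submodule_of_iSupIndep_of_iSup_eq_top hAind hAtop
  have hdim : finrank K V = Nat.card D.range * finrank K (End.eigenspace (ρ a) l) := by
    rw [← (LinearEquiv.ofBijective (DirectSum.coeLinearMap A) hAint).finrank_eq,
      finrank_directSum]
    rw [Finset.sum_congr rfl (fun i _ => hAdim i), Finset.sum_const, Finset.card_univ,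
      Nat.card_eq_fintype_card, smul_eq_mul]
  -- the inertia subgroup
  have hH : D.ker ≠ ⊤ := by
    intro h
    have hd1 : ∀ g, d g = 1 := fun g => by
      have : g ∈ D.ker := by rw [h]; trivial
      rw [← hD, MonoidHom.mem_ker.1 this, Units.val_one]
    refine haZ ⟨l, fun v => ?_⟩
    rw [← End.mem_eigenspace_iff]
    have := (hirr (End.eigenspace (ρ a) l) ?_).resolve_left hl
    · rw [this]; trivial
    · rintro g _ ⟨v, hv, rfl⟩
      simpa [hd1] using hmapE g _ _ hv
  have hdker : ∀ g, g ∈ D.ker ↔ d g = 1 := fun g => by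
    rw [MonoidHom.mem_ker, ← Units.val_inj, hD, Units.val_one]
  let E := End.eigenspace (ρ a) l
  have hEk : ∀ g : D.ker, ∀ v ∈ E, ρ g v ∈ E := fun g v hv => by
    have := hmapE g _ _ hv
    rwa [(hdker g).1 g.2, one_mul] at this
  let σ : Representation K D.ker E :=
    { toFun := fun g => (ρ g).restrict (hEk g)
      map_one' := by ext; simp
      map_mul' := fun g h => by ext; simp }
  have hσ : ∀ g (v : E), ((σ g v : E) : V) = ρ g v := fun g v => rfl
  have hcard : Nat.card D.ker < n := by
    rw [← hn]
    exact lt_of_le_of_ne (Subgroup.card_le_card_group _)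
      (fun h => hH (Subgroup.eq_top_of_card_eq _ h))
  obtain ⟨j, hj⟩ := ih _ hcard D.ker (hG.to_subgroup _) rfl E σ ⟨⟨⟨⟨w0, hw0.1⟩, 0, fun h =>
      hw0.2 (congrArg Subtype.val h)⟩⟩, by
    intro U hU
    let U' : Submodule K V := U.map E.subtype
    let S : Submodule K V := ⨆ g, U'.map (ρ g)
    have hS : ∀ g, S.map (ρ g) ≤ S := by
      intro g
      rw [Submodule.map_iSup]
      refine iSup_le fun h => ?_
      refine le_trans ?_ (le_iSup _ (g * h))
      rintro _ ⟨_, ⟨v, hv, rfl⟩, rfl⟩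
      exact ⟨v, hv, hmul g h v⟩
    rcases hirr S hS with h | h
    · left
      rw [eq_bot_iff]
      intro u hu
      have h1 : (u : V) ∈ S := (le_iSup (fun g => U'.map (ρ g)) 1)
        ⟨u, ⟨u, hu, rfl⟩, by simp⟩
      rw [h] at h1
      exact Subtype.ext (by simpa using h1)
    · right
      have hSle : S ≤ U' ⊔ ⨆ (m) (_ : m ≠ l), End.eigenspace (ρ a) m := by
        refine iSup_le fun g => ?_
        by_cases hg : d g = 1
        · refine le_trans ?_ le_sup_left
          rintro _ ⟨_, ⟨u, hu, rfl⟩, rfl⟩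
          exact ⟨σ ⟨g, (hdker g).2 hg⟩ u, hU _ ⟨u, hu, rfl⟩, rfl⟩
        · refine le_trans ?_ le_sup_right
          refine le_trans ?_ (le_iSup₂ (f := fun m (_ : m ≠ l) => End.eigenspace (ρ a) m)
            (d g * l) (fun h => hg (mul_right_cancel₀ hl0 (by rw [h, one_mul]))))
          rintro _ ⟨_, ⟨u, hu, rfl⟩, rfl⟩
          exact hmapE g l _ u.2
      rw [eq_top_iff]
      rintro ⟨v, hv⟩ -
      have hvS : v ∈ S := by rw [h]; trivial
      obtain ⟨_, ⟨u, hu, rfl⟩, y, hy, huy⟩ := Submodule.mem_sup.1 (hSle hvS)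
      have hdis := iSupIndep_def.1 (End.eigenspaces_iSupIndep (ρ a)) l
      have hy' : y ∈ E := by
        have : y = v - u := by rw [← huy]; simp
        rw [this]
        exact E.sub_mem hv u.2
      have hy0 : y = 0 := Submodule.disjoint_def.1 hdis y hy' hy
      have : (⟨v, hv⟩ : E) = u := Subtype.ext (by
        rw [hy0, add_zero] at huy
        exact huy.symm)
      rw [this]
      exact hu⟩
  obtain ⟨k, hk⟩ := IsPGroup.iff_card.1 hG
  have hdvd := Subgroup.card_range_dvd D
  rw [hk] at hdvd
  obtain ⟨i, -, hi⟩ := (Nat.dvd_prime_pow hp).1 hdvd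
  exact ⟨i + j, by rw [hdim, hi, pow_add]; exact congrArg _ hj⟩

/-- Every irreducible representation of a finite `p`-group over an algebraically
closed field of characteristic `≠ p` has dimension a power of `p`. -/
theorem finrank_irreducible_rep_isPGroup_eq_pow (p : ℕ) (hp : p.Prime)
    (K : Type*) [Field K] [IsAlgClosed K] (hchar : ringChar K ≠ p)
    (G : Type*) [Group G] [Finite G] (hG : IsPGroup p G)
    (V : Type*) [AddCommGroup V] [Module K V] [FiniteDimensional K V]
    (ρ : Representation K G V) (hirr : ρ.IsIrreducibleRep) :
    ∃ j : ℕ, Module.finrank K V = p ^ j := by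
  exact irr_pgroup_aux p hp K _ G hG rfl V ρ hirr
end

section
/- Let p be a prime and G a finite p-group. The dimension of every irreducible representation of G on a finite-dimensional rational vector space V divides (p−1)p^j for some j ∈ ℕ, i.e. there exists j ∈ ℕ with dim_ℚ V ∣ (p−1)·p^j. -/
universe u

/-- Dimension count for invariant subspaces of `ZMod p → V`. -/
lemma aux_dvd {K V G E : Type*} [Field K] [AddCommGroup V] [Module K V] [AddCommGroup E]
    [Module K E] [FiniteDimensional K E] [Group G]
    (ρ : G → Module.End K V) (σ : G → Module.End K E) (W : Submodule K V)
    (hirr : ∀ U : Submodule K V, U ≤ W → (∀ g, ∀ u ∈ U, ρ g u ∈ U) → U = ⊥ ∨ U = W)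
    {ι : Type*} [DecidableEq ι] (φ : ι → E →ₗ[K] V) (c : ι → G → K) (hc : ∀ i g, c i g ≠ 0)
    (hφ : ∀ i g f, φ i (σ g f) = c i g • ρ g (φ i f))
    (s : Finset ι) : ∀ (N : Submodule K E), (∀ g, ∀ f ∈ N, σ g f ∈ N) →
      (∀ i, ∀ f ∈ N, φ i f ∈ W) → (∀ f ∈ N, (∀ i ∈ s, φ i f = 0) → f = 0) →
      Module.finrank K W ∣ Module.finrank K N := by
  induction s using Finset.induction_on with
  | empty =>
    intro N _ _ h
    have : N = ⊥ := by
      rw [Submodule.eq_bot_iff]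
      intro f hf
      exact h f hf (by simp)
    subst this
    simp
  | insert k s hk ih =>
    intro N hN hW h
    have h1 := ih (N ⊓ LinearMap.ker (φ k)) (by
        rintro g f ⟨hf, hf'⟩
        refine ⟨hN g f hf, ?_⟩
        have hf' : φ k f = 0 := hf'
        change φ k _ = 0
        rw [hφ, hf']
        simp) (fun i f hf => hW i f hf.1) (by
        rintro f ⟨hf, hf'⟩ h2
        apply h f hf
        intro i hi
        rcases Finset.mem_insert.1 hi with rfl | hi
        · exact hf'
        · exact h2 i hi)
    have h2 : Module.finrank K W ∣ Module.finrank K (N.map (φ k)) := by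
      rcases hirr (N.map (φ k)) (by
        rintro _ ⟨f, hf, rfl⟩
        exact hW k f hf) (by
        rintro g _ ⟨f, hf, rfl⟩
        refine ⟨(c k g)⁻¹ • σ g f, N.smul_mem _ (hN g f hf), ?_⟩
        rw [map_smul, hφ, smul_smul, inv_mul_cancel₀ (hc k g), one_smul]) with h | h
      · rw [h]; simp
      · rw [h]
    have h3 := LinearMap.finrank_range_add_finrank_ker ((φ k).domRestrict N)
    have h4 : LinearMap.range ((φ k).domRestrict N) = N.map (φ k) := by
      rw [LinearMap.range_domRestrict]
    have h5 : Module.finrank K (LinearMap.ker ((φ k).domRestrict N))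
        = Module.finrank K (N ⊓ LinearMap.ker (φ k) : Submodule K E) := by
      rw [LinearMap.ker_domRestrict]
      rw [← Submodule.map_comap_subtype]
      exact (Submodule.equivMapOfInjective N.subtype N.injective_subtype _).finrank_eq
    rw [h4, h5] at h3
    rw [← h3]
    exact dvd_add h2 h1

/-- A nontrivial finite `p`-group surjects onto `ZMod p`. -/
lemma aux_char {p : ℕ} (hp : p.Prime) {G : Type*} [Group G] [Finite G] {n : ℕ}
    (hG : Nat.card G = p ^ (n + 1)) :
    ∃ χ : G →* Multiplicative (ZMod p), Function.Surjective χ ∧ Nat.card χ.ker = p ^ n := by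
  have := Fact.mk hp
  obtain ⟨H, hH⟩ := Sylow.exists_subgroup_card_pow_prime p (G := G) (n := n)
    (by rw [hG]; exact pow_dvd_pow _ (Nat.le_succ n))
  have hidx : H.index = p := by
    have := H.card_mul_index
    rw [hH, hG, pow_succ] at this
    exact Nat.eq_of_mul_eq_mul_left (pow_pos hp.pos n) this
  have : H.Normal := by
    apply Subgroup.normal_of_index_eq_minFac_card
    rw [hidx, hG, hp.pow_minFac (Nat.succ_ne_zero n)]
  have hc : Nat.card (G ⧸ H) = p := hidx
  let e : G ⧸ H ≃* Multiplicative (ZMod p) := mulEquivOfPrimeCardEq hc (by simp)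
  refine ⟨e.toMonoidHom.comp (QuotientGroup.mk' H),
    e.surjective.comp (QuotientGroup.mk'_surjective H), ?_⟩
  have : (e.toMonoidHom.comp (QuotientGroup.mk' H)).ker = H := by
    ext x
    simp [MonoidHom.mem_ker]
  rw [this, hH]

/-- Over a field with a primitive `p`-th root of unity. -/
lemma aux_main {p : ℕ} (hp : p.Prime) {K V : Type*} [Field K] [CharZero K] [AddCommGroup V]
    [Module K V] [FiniteDimensional K V] (ζ : K) (hζ : IsPrimitiveRoot ζ p) (n : ℕ) :
    ∀ (G : Type u) [Group G] [Finite G], Nat.card G = p ^ n →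
    ∀ (ρ : Representation K G V) (W : Submodule K V), W ≠ ⊥ → (∀ g, ∀ w ∈ W, ρ g w ∈ W) →
    (∀ U : Submodule K V, U ≤ W → (∀ g, ∀ u ∈ U, ρ g u ∈ U) → U = ⊥ ∨ U = W) →
    Module.finrank K W ∣ p ^ n := by
  have := Fact.mk hp
  induction n with
  | zero =>
    intro G _ _ hG ρ W hW hinv hirr
    obtain ⟨w, hw, hw0⟩ := Submodule.exists_mem_ne_zero_of_ne_bot hW
    have hs : Subsingleton G := (Nat.card_eq_one_iff_unique.1 (by simpa using hG)).1
    rcases hirr (K ∙ w) (by simpa using hw) (by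
      intro g u hu
      rw [Subsingleton.elim g 1, map_one]
      exact hu) with h | h
    · simp [hw0] at h
    · rw [← h, finrank_span_singleton hw0]
      simp
  | succ n ih =>
    intro G _ _ hG ρ W hW hinv hirr
    obtain ⟨χ, hχ, hker⟩ := aux_char hp hG
    -- minimal ker χ-invariant subspace
    obtain ⟨U, ⟨hU0, hUW, hUinv⟩, hUmin⟩ := WellFounded.has_min
      (wellFounded_lt : WellFounded ((· < ·) : Submodule K V → Submodule K V → Prop))
      {U | U ≠ ⊥ ∧ U ≤ W ∧ ∀ g ∈ χ.ker, ∀ u ∈ U, ρ g u ∈ U}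
      ⟨W, hW, le_rfl, fun g _ => hinv g⟩
    have hUd := ih χ.ker hker (ρ.comp χ.ker.subtype) U hU0 (fun g => hUinv g g.2) (by
      intro U' hU' h
      by_contra! hcon
      exact hUmin U' ⟨hcon.1, hU'.trans hUW, fun g hg => h ⟨g, hg⟩⟩
        (lt_of_le_of_ne hU' hcon.2))
    let t : G → ZMod p := fun g => (χ g).toAdd
    have ht : ∀ a b, t (a * b) = t a + t b := fun a b => by simp [t]
    have hmul : ∀ a b v, ρ a (ρ b v) = ρ (a * b) v := fun a b v => by simp
    choose s hs using hχ
    let s' : ZMod p → G := fun x => s (Multiplicative.ofAdd x)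
    have hs' : ∀ x, t (s' x) = x := fun x => by simp [t, s', hs]
    let N : Submodule K (ZMod p → V) := Submodule.pi Set.univ (fun x => U.map (ρ (s' x)))
    have hNmem : ∀ f, f ∈ N ↔ ∀ x, ∃ u ∈ U, ρ (s' x) u = f x := by
      intro f; simp [N, Submodule.mem_pi]
    have hinj : ∀ g, Function.Injective (ρ g) := fun g => by
      apply Function.LeftInverse.injective (g := ρ g⁻¹)
      intro v
      rw [hmul]; simp
    have hNrank : Module.finrank K N = p * Module.finrank K U := by
      let e : N ≃ₗ[K] ((x : ZMod p) → (U.map (ρ (s' x)) : Submodule K V)) :=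
        { toFun := fun f x => ⟨f.1 x, f.2 x trivial⟩
          map_add' := fun _ _ => rfl
          map_smul' := fun _ _ => rfl
          invFun := fun f => ⟨fun x => (f x).1, fun x _ => (f x).2⟩
          left_inv := fun _ => rfl
          right_inv := fun _ => rfl }
      rw [e.finrank_eq, Module.finrank_pi_fintype]
      rw [Finset.sum_congr rfl (fun x _ =>
        ((Submodule.equivMapOfInjective (ρ (s' x)) (hinj _) U).finrank_eq).symm)]
      simp
    let ψ : AddChar (ZMod p) K := AddChar.zmodChar p hζ.pow_eq_one
    have hψ : ψ.IsPrimitive := AddChar.zmodChar_primitive_of_primitive_root p hζ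
    let φ : ZMod p → (ZMod p → V) →ₗ[K] V := fun k =>
      ∑ x, ψ (k * x) • LinearMap.proj x
    have hφa : ∀ k f, φ k f = ∑ x, ψ (k * x) • f x := fun k f => by
      simp [φ]
    let σ : G → Module.End K (ZMod p → V) := fun g =>
      LinearMap.pi (fun x => (ρ g).comp (LinearMap.proj (x - t g)))
    have hσ : ∀ g f x, σ g f x = ρ g (f (x - t g)) := fun g f x => rfl
    have hψ0 : ∀ x, ψ x ≠ 0 := fun x => (ψ.val_isUnit x).ne_zero
    have key := aux_dvd (fun g => ρ g) σ W hirr φ (fun k g => ψ (k * t g))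
      (fun k g => hψ0 _) (by
        intro k g f
        rw [hφa, hφa, map_sum, Finset.smul_sum]
        rw [← Equiv.sum_comp (Equiv.addRight (t g))]
        refine Finset.sum_congr rfl fun x _ => ?_
        simp only [Equiv.coe_addRight, hσ, add_sub_cancel_right, map_smul, smul_smul, mul_add,
          AddChar.map_add_eq_mul]
        rw [mul_comm]) Finset.univ N (by
        intro g f hf
        rw [hNmem] at hf ⊢
        intro x
        obtain ⟨u, hu, hux⟩ := hf (x - t g)
        refine ⟨ρ ((s' x)⁻¹ * (g * s' (x - t g))) u, hUinv _ ?_ u hu, ?_⟩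
        · rw [MonoidHom.mem_ker]
          have h1 : t (s' x * ((s' x)⁻¹ * (g * s' (x - t g)))) = x := by
            rw [mul_inv_cancel_left, ht, hs']; ring
          rw [ht, hs'] at h1
          have h2 : t ((s' x)⁻¹ * (g * s' (x - t g))) = 0 := by simpa using h1
          exact h2
        · rw [hσ, ← hux, hmul, hmul, mul_inv_cancel_left]) (by
        intro k f hf
        rw [hφa]
        refine W.sum_mem fun x _ => W.smul_mem _ ?_
        obtain ⟨u, hu, hux⟩ := (hNmem f).1 hf x
        rw [← hux]
        exact hinv _ _ (hUW hu)) (by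
        intro f _ hf
        funext y
        have h1 : ∑ k, ψ (-(k * y)) • φ k f = 0 :=
          Finset.sum_eq_zero fun k hk => by rw [hf k hk, smul_zero]
        have h2 : ∑ k, ψ (-(k * y)) • φ k f = (p : K) • f y := by
          simp only [hφa, Finset.smul_sum, smul_smul, ← AddChar.map_add_eq_mul]
          rw [Finset.sum_comm]
          have h3 : ∀ x, ∑ k, ψ (-(k * y) + k * x) • f x
              = if x = y then (p : K) • f y else 0 := by
            intro x
            rw [← Finset.sum_smul]
            have := AddChar.sum_mulShift (x - y) hψ
            have h4 : ∀ k, -(k * y) + k * x = k * (x - y) := fun k => by ring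
            simp only [h4, this, sub_eq_zero]
            split_ifs with h
            · simp [h]
            · simp
          simp [h3]
        rw [h2] at h1
        exact (smul_eq_zero.1 h1).resolve_left (by exact_mod_cast hp.ne_zero))
    rw [hNrank] at key
    rw [pow_succ, mul_comm]
    exact key.trans (Nat.mul_dvd_mul_left p hUd)

theorem finrank_irreducible_rep_isPGroup_dvd_rat (p : ℕ) (hp : p.Prime)
    (G : Type*) [Group G] [Finite G] (hG : IsPGroup p G)
    (V : Type*) [AddCommGroup V] [Module ℚ V] [FiniteDimensional ℚ V]
    (ρ : Representation ℚ G V) (hirr : ρ.IsIrreducibleRep) :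
    ∃ j : ℕ, Module.finrank ℚ V ∣ (p - 1) * p ^ j := by
  have := Fact.mk hp
  obtain ⟨hnt, hirr⟩ := hirr
  have hirr' : ∀ W : Submodule ℚ V, (∀ g : G, ∀ w ∈ W, ρ g w ∈ W) → W = ⊥ ∨ W = ⊤ :=
    fun W h => hirr W fun g => by
      rintro _ ⟨w, hw, rfl⟩
      exact h g w hw
  by_cases htriv : ∀ g, ρ g = 1
  · obtain ⟨w, hw0⟩ := exists_ne (0 : V)
    refine ⟨0, ?_⟩
    rcases hirr' (ℚ ∙ w) (by
      intro g u hu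
      rw [htriv g]
      exact hu) with h | h
    · simp [hw0] at h
    · rw [← finrank_top, ← h, finrank_span_singleton hw0]
      simp
  push Not at htriv
  obtain ⟨g₀, hg₀⟩ := htriv
  -- a central element of order p in the image
  obtain ⟨z, hz1, hzp, hzc⟩ : ∃ z : G, ρ z ≠ 1 ∧ (ρ z) ^ p = 1 ∧
      ∀ g v, ρ g (ρ z v) = ρ z (ρ g v) := by
    let Q := G ⧸ (MonoidHom.ker ρ)
    have hQ : IsPGroup p Q := hG.to_quotient _
    have : Nontrivial Q := ⟨(g₀ : Q), 1, by
      rw [Ne, QuotientGroup.eq_one_iff, MonoidHom.mem_ker]; exact hg₀⟩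
    have := hQ.center_nontrivial
    have hC : IsPGroup p (Subgroup.center Q) := hQ.to_subgroup _
    obtain ⟨m, hm0, hm⟩ := (hC.nontrivial_iff_card).1 this
    obtain ⟨x, hx⟩ := exists_prime_orderOf_dvd_card' (G := Subgroup.center Q) p
      (by rw [hm]; exact dvd_pow_self p hm0.ne')
    obtain ⟨z, hz⟩ := QuotientGroup.mk_surjective x.1
    refine ⟨z, ?_, ?_, ?_⟩
    · intro h
      have h1 : (z : Q) = 1 := by
        rw [QuotientGroup.eq_one_iff, MonoidHom.mem_ker]; exact h
      have : x = 1 := Subtype.ext (by rw [← hz, h1]; rfl)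
      rw [this, orderOf_one] at hx
      exact hp.one_lt.ne hx
    · have h1 : ((z ^ p : G) : Q) = 1 := by
        rw [QuotientGroup.mk_pow, hz, ← SubgroupClass.coe_pow, ← hx, pow_orderOf_eq_one]; rfl
      rw [QuotientGroup.eq_one_iff, MonoidHom.mem_ker, map_pow] at h1
      exact h1
    · intro g v
      have h1 : ((g * z : G) : Q) = ((z * g : G) : Q) := by
        rw [QuotientGroup.mk_mul, QuotientGroup.mk_mul, hz]
        exact Subgroup.mem_center_iff.1 x.2 g
      rw [QuotientGroup.eq, MonoidHom.mem_ker] at h1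
      have h2 : ρ (z * g) = ρ (g * z) := by
        have : z * g = g * z * ((g * z)⁻¹ * (z * g)) := by group
        rw [this, map_mul ρ (g * z), h1, mul_one]
      rw [map_mul, map_mul] at h2
      exact (LinearMap.congr_fun h2 v).symm
  let T : Module.End ℚ V := ρ z
  have hker : LinearMap.ker (T - 1) = ⊥ := by
    rcases hirr' (LinearMap.ker (T - 1)) (by
      intro g w hw
      simp only [LinearMap.mem_ker, LinearMap.sub_apply, Module.End.one_apply, sub_eq_zero] at hw ⊢
      rw [← hzc g w]
      exact congrArg _ hw) with h | h
    · exact h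
    · exfalso
      rw [LinearMap.ker_eq_top, sub_eq_zero] at h
      exact hz1 h
  have hcyc : Polynomial.aeval T (Polynomial.cyclotomic p ℚ) = 0 := by
    have h1 : (T - 1) * Polynomial.aeval T (Polynomial.cyclotomic p ℚ) = 0 := by
      have h2 := congrArg (Polynomial.aeval T) (Polynomial.cyclotomic_prime_mul_X_sub_one ℚ p)
      rw [mul_comm] at h2
      simp only [map_mul, map_sub, Polynomial.aeval_X, map_one, map_pow] at h2
      rw [h2, sub_eq_zero]
      exact hzp
    ext v
    have h2 := LinearMap.congr_fun h1 v
    have h3 : Polynomial.aeval T (Polynomial.cyclotomic p ℚ) v ∈ LinearMap.ker (T - 1) := h2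
    rw [hker] at h3
    simpa using h3
  have hirrc : Irreducible (Polynomial.cyclotomic p ℚ) :=
    Polynomial.cyclotomic.irreducible_rat hp.pos
  have := Fact.mk hirrc
  let K := AdjoinRoot (Polynomial.cyclotomic p ℚ)
  have : CharZero K := algebraRat.charZero K
  let F : K →+* Module.End ℚ V := Ideal.Quotient.lift _ (Polynomial.aeval T).toRingHom (by
    intro a ha
    obtain ⟨b, rfl⟩ := Ideal.mem_span_singleton.1 ha
    change Polynomial.aeval T _ = 0
    rw [map_mul, hcyc, zero_mul])
  letI : Module K V := Module.compHom V F
  have hFmk : ∀ q : Polynomial ℚ, ∀ v : V,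
      (AdjoinRoot.mk _ q : K) • v = Polynomial.aeval T q v := fun q v => rfl
  have : IsScalarTower ℚ K V := by
    refine IsScalarTower.of_algebraMap_smul fun r v => ?_
    have h1 : (algebraMap ℚ K r) = AdjoinRoot.mk _ (Polynomial.C r) := rfl
    rw [h1, hFmk, Polynomial.aeval_C]
    rfl
  have : FiniteDimensional K V := FiniteDimensional.right ℚ K V
  have hcomm : ∀ g (k : K) v, ρ g (k • v) = k • ρ g v := by
    intro g k v
    obtain ⟨q, rfl⟩ := AdjoinRoot.mk_surjective k
    rw [hFmk, hFmk]
    have h1 : Commute (ρ g) T := LinearMap.ext fun v => hzc g v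
    have h2 : Commute (ρ g) (Polynomial.aeval T q) := by
      induction q using Polynomial.induction_on' with
      | add a b ha hb => rw [map_add]; exact ha.add_right hb
      | monomial n a =>
        rw [Polynomial.aeval_monomial]
        exact (Algebra.commute_algebraMap_right a (ρ g)).mul_right (h1.pow_right n)
    exact LinearMap.congr_fun h2 v
  let ρK : Representation K G V :=
    { toFun := fun g => { toFun := ρ g, map_add' := map_add _, map_smul' := hcomm g }
      map_one' := by ext v; simp
      map_mul' := fun a b => by ext v; simp }
  have hρK : ∀ g v, ρK g v = ρ g v := fun _ _ => rfl
  have hζ : IsPrimitiveRoot (AdjoinRoot.root (Polynomial.cyclotomic p ℚ) : K) p := by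
    have : NeZero (p : K) := ⟨by exact_mod_cast hp.ne_zero⟩
    rw [← Polynomial.isRoot_cyclotomic_iff]
    have := AdjoinRoot.isRoot_root (Polynomial.cyclotomic p ℚ)
    rwa [Polynomial.map_cyclotomic] at this
  obtain ⟨n, hn⟩ := (IsPGroup.iff_card).1 hG
  have hmain := aux_main hp _ hζ n G hn ρK ⊤ top_ne_bot (fun _ _ _ => trivial) (by
    intro U _ hU
    rcases hirr' (U.restrictScalars ℚ) hU with h | h
    · left; exact (Submodule.restrictScalars_eq_bot_iff _ _ _).1 h
    · right; exact (Submodule.restrictScalars_eq_top_iff _ _ _).1 h)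
  rw [finrank_top] at hmain
  refine ⟨n, ?_⟩
  rw [← Module.finrank_mul_finrank ℚ K V]
  have hK : Module.finrank ℚ K = p - 1 := by
    have : Module.finrank ℚ K = (Polynomial.cyclotomic p ℚ).natDegree :=
      finrank_quotient_span_eq_natDegree
    rw [this, Polynomial.natDegree_cyclotomic, Nat.totient_prime hp]
  rw [hK]
  exact Nat.mul_dvd_mul_left _ hmain
end

section
/- Let p be a prime, k a finite field with char(k) ≠ p, and G a finite p-group. The dimension of every irreducible representation of G on a finite-dimensional k-vector space V divides (p−1)p^j for some j ∈ ℕ, i.e. there exists j ∈ ℕ with dim_k V ∣ (p−1)·p^j. -/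
namespace PRepAux

open Module

universe u v

/-- Restriction of a representation to an invariant subspace. -/
def restrictRep {k G V : Type*} [Field k] [Group G] [AddCommGroup V] [Module k V]
    (ρ : Representation k G V) (W : Submodule k V) (h : ∀ g, ∀ x ∈ W, ρ g x ∈ W) :
    Representation k G W where
  toFun g := (ρ g).restrict (h g)
  map_one' := by ext x; simp
  map_mul' a b := by ext x; simp

theorem restrictRep_coe {k G V : Type*} [Field k] [Group G] [AddCommGroup V] [Module k V]
    (ρ : Representation k G V) (W : Submodule k V) (h : ∀ g, ∀ x ∈ W, ρ g x ∈ W) (g : G) (x : W) :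
    ((restrictRep ρ W h g x : W) : V) = ρ g x := rfl

/-- The dimension of an invariant subspace of an isotypic representation. -/
theorem dvd_aux {k G V X : Type*} [Field k] [Group G] [AddCommGroup V] [Module k V]
    [AddCommGroup X] [Module k X] [FiniteDimensional k X]
    (ρ : Representation k G V) (hirr : ρ.IsIrreducibleRep) (σ : Representation k G X)
    {ι : Type*} (s : Finset ι) (f : ι → X →ₗ[k] V) (hf : ∀ i g x, f i (σ g x) = ρ g (f i x)) :
    ∀ U : Submodule k X, (∀ g, ∀ x ∈ U, σ g x ∈ U) →
      (∀ x ∈ U, (∀ i ∈ s, f i x = 0) → x = 0) → finrank k V ∣ finrank k U := by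
  classical
  induction s using Finset.induction_on with
  | empty =>
    intro U _ h0
    have : U = ⊥ := (Submodule.eq_bot_iff _).2 fun x hx => h0 x hx (by simp)
    subst this
    simp
  | insert i s his ih =>
    intro U hU h0
    have hker := ih (U ⊓ LinearMap.ker (f i))
      (fun g x hx => ⟨hU g x hx.1, by
        have := hx.2
        simp only [LinearMap.mem_ker, SetLike.mem_coe] at this ⊢
        rw [hf, this, map_zero]⟩)
      (fun x hx h => h0 x hx.1 (by
        intro j hj
        rcases Finset.mem_insert.1 hj with rfl | hj
        · exact hx.2
        · exact h j hj))
    have h1 := LinearMap.finrank_range_add_finrank_ker ((f i).domRestrict U)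
    have h2 : finrank k (LinearMap.ker ((f i).domRestrict U)) =
        finrank k (U ⊓ LinearMap.ker (f i) : Submodule k X) := by
      rw [LinearMap.ker_domRestrict, ← Submodule.finrank_map_subtype_eq,
        Submodule.map_comap_subtype]
    have h3 : finrank k V ∣ finrank k (LinearMap.range ((f i).domRestrict U)) := by
      rcases hirr.2 (LinearMap.range ((f i).domRestrict U)) (by
        rintro g _ ⟨_, ⟨x, rfl⟩, rfl⟩
        exact ⟨⟨σ g x, hU g x x.2⟩, by simp [hf]⟩) with h | h
      · rw [h]; simp
      · rw [h]; simp
    rw [← h1, h2]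
    exact dvd_add h3 hker

/-- Existence of an eigenvalue. -/
theorem exists_eigen {L W : Type*} [Field L] [AddCommGroup W] [Module L W]
    [FiniteDimensional L W] [Nontrivial W] (N : ℕ) (hN : 0 < N)
    (hs : (Polynomial.X ^ N - 1 : Polynomial L).Splits) (T : W →ₗ[L] W) (hT : T ^ N = 1) :
    ∃ a : L, Module.End.HasEigenvalue T a := by
  have hd : minpoly L T ∣ (Polynomial.X ^ N - 1 : Polynomial L) := by
    apply minpoly.dvd
    simp [hT]
  have hsp := hs.of_dvd (Polynomial.X_pow_sub_C_ne_zero hN (1 : L)) hd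
  obtain ⟨a, ha⟩ := hsp.exists_eval_eq_zero
    (minpoly.degree_pos (Algebra.IsIntegral.isIntegral T)).ne'
  exact ⟨a, Module.End.hasEigenvalue_of_isRoot ha⟩

/-- The subgroup of elements acting by scalars. -/
def scalars {L G W : Type*} [Field L] [Group G] [AddCommGroup W] [Module L W]
    (ρ : Representation L G W) : Subgroup G where
  carrier := {g | ∃ c : Lˣ, ∀ x, ρ g x = c • x}
  one_mem' := ⟨1, by simp⟩
  mul_mem' := by
    rintro a b ⟨c, hc⟩ ⟨d, hd⟩
    exact ⟨c * d, fun x => by simp [hc, hd, mul_smul]⟩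
  inv_mem' := by
    rintro a ⟨c, hc⟩
    refine ⟨c⁻¹, fun x => ?_⟩
    rw [eq_inv_smul_iff, ← hc, ← Module.End.mul_apply, ← map_mul]
    simp

instance {L G W : Type*} [Field L] [Group G] [AddCommGroup W] [Module L W]
    (ρ : Representation L G W) : (scalars ρ).Normal where
  conj_mem := by
    rintro a ⟨c, hc⟩ g
    refine ⟨c, fun x => ?_⟩
    rw [map_mul, map_mul, Module.End.mul_apply, Module.End.mul_apply, hc,
      Units.smul_def, map_smul, ← Module.End.mul_apply, ← map_mul]
    simp [Units.smul_def]

theorem finrank_of_scalars {L G W : Type*} [Field L] [Group G] [AddCommGroup W] [Module L W]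
    (ρ : Representation L G W) (hirr : ρ.IsIrreducibleRep) (h : ∀ g, g ∈ scalars ρ) :
    finrank L W = 1 := by
  obtain ⟨hn, hi⟩ := hirr
  obtain ⟨w, hw⟩ := exists_ne (0 : W)
  rcases hi (Submodule.span L {w}) (by
    rintro g _ ⟨x, hx, rfl⟩
    obtain ⟨c, hc⟩ := h g
    rw [hc]
    exact Submodule.smul_mem _ (c : L) hx) with h | h
  · simp [hw] at h
  · rw [← finrank_top, ← h, finrank_span_singleton hw]

theorem exists_char {p : ℕ} [Fact p.Prime] {L G W : Type*} [Field L] [Group G] [Finite G]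
    (hG : IsPGroup p G) [AddCommGroup W] [Module L W] [Nontrivial W]
    (ρ : Representation L G W) (h : ¬ ∀ g, g ∈ scalars ρ) :
    ∃ g, g ∉ scalars ρ ∧ ∃ c : G →* Lˣ, ∀ h x, ρ h (ρ g x) = (c h : L) • ρ g (ρ h x) := by
  have hnt : Nontrivial (G ⧸ scalars ρ) := by
    rw [QuotientGroup.nontrivial_iff]
    intro h'
    exact h fun g => h' ▸ Subgroup.mem_top g
  have hc := (hG.to_quotient (scalars ρ)).center_nontrivial
  obtain ⟨⟨z, hz⟩, hz1⟩ := exists_ne (1 : Subgroup.center (G ⧸ scalars ρ))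
  obtain ⟨g, rfl⟩ := QuotientGroup.mk_surjective z
  have hg : g ∉ scalars ρ := fun hg => hz1 (Subtype.ext ((QuotientGroup.eq_one_iff g).2 hg))
  refine ⟨g, hg, ?_⟩
  have key : ∀ h, ∃ c : Lˣ, ∀ x, ρ h (ρ g x) = (c : L) • ρ g (ρ h x) := by
    intro h
    have h1 := Subgroup.mem_center_iff.1 hz (h : G ⧸ scalars ρ)
    rw [← QuotientGroup.mk_mul, ← QuotientGroup.mk_mul, eq_comm, QuotientGroup.eq] at h1
    obtain ⟨c, hc⟩ := h1
    refine ⟨c, fun x => ?_⟩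
    have := hc x
    rw [Units.smul_def] at this
    rw [← map_smul, ← map_smul, ← this]
    simp only [← Module.End.mul_apply, ← map_mul]
    congr 2
    group
  choose c hc using key
  obtain ⟨w, hw⟩ := exists_ne (0 : W)
  have inj : ∀ (g : G) (x : W), ρ g x = 0 → x = 0 := fun g x hx => by
    have := congrArg (ρ g⁻¹) hx
    rw [← Module.End.mul_apply, ← map_mul] at this
    simpa using this
  refine ⟨MonoidHom.mk' c fun a b => ?_, hc⟩
  have h1 := hc (a * b) w
  rw [map_mul, Module.End.mul_apply, hc b, map_smul, hc a, smul_smul, ← Module.End.mul_apply (ρ a),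
    ← map_mul] at h1
  have h2 := smul_left_injective L (fun h => hw (inj _ _ (inj _ _ h))) h1
  apply Units.ext
  rw [← h2, Units.val_mul, mul_comm]

theorem pow_finrank {p : ℕ} (hp : p.Prime) {L : Type*} [Field L] (n : ℕ)
    (hs : (Polynomial.X ^ (p ^ n) - 1 : Polynomial L).Splits) (m : ℕ) :
    ∀ (G : Type u) [Group G] [Finite G] (_ : IsPGroup p G) (_ : ∀ g : G, g ^ (p ^ n) = 1)
      (_ : Nat.card G ≤ m)
      (W : Type v) [AddCommGroup W] [Module L W] [FiniteDimensional L W]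
      (ρ : Representation L G W) (_ : ρ.IsIrreducibleRep), ∃ a : ℕ, finrank L W = p ^ a := by
  classical
  have := Fact.mk hp
  induction m with
  | zero =>
    intro G _ _ _ _ h
    have := Nat.card_pos (α := G)
    omega
  | succ m ih =>
  intro G _ _ hG hexp hcard W _ _ _ ρ hirr
  by_cases hsc : ∀ g, g ∈ scalars ρ
  · exact ⟨0, by simpa using finrank_of_scalars ρ hirr hsc⟩
  have hnt := hirr.1
  obtain ⟨g, hg, c, hc⟩ := exists_char hG ρ hsc
  obtain ⟨a, ha⟩ := exists_eigen (p ^ n) (pow_pos hp.pos n) hs (ρ g) (by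
    rw [← map_pow, hexp, map_one])
  have ha0 : a ≠ 0 := by
    rintro rfl
    obtain ⟨v, hv⟩ := ha.exists_hasEigenvector
    have h1 := hv.apply_eq_smul
    have h2 := congrArg (ρ g⁻¹) h1
    rw [← Module.End.mul_apply, ← map_mul] at h2
    exact hv.2 (by simpa using h2)
  have hmem : ∀ (h : G) (b : L) (x : W), x ∈ End.eigenspace (ρ g) b →
      ρ h x ∈ End.eigenspace (ρ g) (b * ((c h)⁻¹ : Lˣ)) := by
    intro h b x hx
    rw [End.mem_eigenspace_iff] at hx ⊢
    have h1 := hc h x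
    rw [hx, map_smul] at h1
    rw [mul_comm, mul_smul, h1, smul_smul]
    simp
  -- the eigenspace family
  let E : c.range → Submodule L W := fun χ => End.eigenspace (ρ g) (a * (χ : Lˣ))
  have hE1 : E 1 = End.eigenspace (ρ g) a := by simp [E]
  have hEne : E 1 ≠ ⊥ := hE1 ▸ ha
  have hEmem : ∀ (h : G) (χ : c.range) (x : W), x ∈ E χ →
      ρ h x ∈ E (χ * ⟨c h⁻¹, h⁻¹, rfl⟩) := by
    intro h χ x hx
    have := hmem h _ x hx
    simpa [E, mul_assoc] using this
  have hind : iSupIndep E := by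
    apply (End.eigenspaces_iSupIndep (ρ g)).comp (f := fun χ : c.range => a * ((χ : Lˣ) : L))
    intro χ ψ h
    exact Subtype.ext (Units.ext (mul_left_cancel₀ ha0 h))
  have hgen : ∀ U : Submodule L W, U ≠ ⊥ → ⨆ h, U.map (ρ h) = ⊤ := by
    intro U hU
    refine (hirr.2 (⨆ h, U.map (ρ h)) fun g => ?_).resolve_left fun h => hU ?_
    · rw [Submodule.map_iSup]
      refine iSup_le fun h => ?_
      rw [← Submodule.map_comp]
      refine le_trans (le_of_eq ?_) (le_iSup (fun h => U.map (ρ h)) (g * h))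
      rw [map_mul]; rfl
    · rw [eq_bot_iff, ← h]
      refine le_trans (le_of_eq ?_) (le_iSup (fun h => U.map (ρ h)) 1)
      rw [map_one]; exact (Submodule.map_id U).symm
  have htop : iSup E = ⊤ := by
    rw [eq_top_iff, ← hgen _ hEne]
    refine iSup_le fun h => ?_
    rintro _ ⟨x, hx, rfl⟩
    exact Submodule.mem_iSup_of_mem _ (hEmem h 1 x hx)
  -- all have the same dimension
  have hle : ∀ (h : G) (χ : c.range), finrank L (E χ) ≤ finrank L (E (χ * ⟨c h⁻¹, h⁻¹, rfl⟩)) := by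
    intro h χ
    refine LinearMap.finrank_le_finrank_of_injective (f := (ρ h).restrict (hEmem h χ)) ?_
    intro x y hxy
    have hxy' : ρ h x = ρ h y := congrArg Subtype.val hxy
    have := congrArg (ρ h⁻¹) hxy'
    rw [← Module.End.mul_apply, ← Module.End.mul_apply, ← map_mul] at this
    exact Subtype.ext (by simpa using this)
  have heq : ∀ χ, finrank L (E χ) = finrank L (E 1) := by
    rintro ⟨_, h, rfl⟩
    apply le_antisymm
    · refine (hle h _).trans (le_of_eq (congrArg (fun χ => finrank L (E χ)) ?_))
      exact Subtype.ext (by simp)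
    · refine (hle h⁻¹ _).trans (le_of_eq (congrArg (fun χ => finrank L (E χ)) ?_))
      exact Subtype.ext (by simp)
  have : Finite c.range := Finite.of_surjective _ c.rangeRestrict_surjective
  have := Fintype.ofFinite c.range
  have hinternal : DirectSum.IsInternal E :=
    (DirectSum.isInternal_submodule_iff_iSupIndep_and_iSup_eq_top E).2 ⟨hind, htop⟩
  have hdim : finrank L W = Nat.card c.range * finrank L (E 1) := by
    rw [← (LinearEquiv.ofBijective (DirectSum.coeLinearMap E) hinternal).finrank_eq,
      Module.finrank_directSum]
    simp only [heq, Finset.sum_const, Finset.card_univ, Nat.card_eq_fintype_card, smul_eq_mul]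
  -- the restriction to the kernel
  have hker : ∀ (h : c.ker), ∀ x ∈ E 1, (ρ.comp c.ker.subtype) h x ∈ E 1 := by
    rintro ⟨h, hh⟩ x hx
    have h1 := hEmem h 1 x hx
    have h2 : (1 * ⟨c h⁻¹, h⁻¹, rfl⟩ : c.range) = 1 := by
      apply Subtype.ext
      simp [MonoidHom.mem_ker.1 hh]
    rw [h2] at h1
    exact h1
  have hirr' : (restrictRep (ρ.comp c.ker.subtype) (E 1) hker).IsIrreducibleRep := by
    refine ⟨Submodule.nontrivial_iff_ne_bot.2 hEne, fun U hU => ?_⟩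
    by_cases hU0 : U = ⊥
    · exact Or.inl hU0
    right
    have hU0' : U.map (E 1).subtype ≠ ⊥ := by
      exact fun h => hU0 (Submodule.map_injective_of_injective (E 1).injective_subtype (by simpa using h))
    have hUE : U.map (E 1).subtype ≤ E 1 := Submodule.map_subtype_le _ _
    have h1 : U.map (E 1).subtype ⊔ ⨆ χ, ⨆ (_ : χ ≠ 1), E χ = ⊤ := by
      rw [eq_top_iff, ← hgen _ hU0']
      refine iSup_le fun h => ?_
      rintro _ ⟨_, ⟨x, hx, rfl⟩, rfl⟩
      by_cases hh : h ∈ c.ker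
      · apply Submodule.mem_sup_left
        exact ⟨_, hU ⟨h, hh⟩ ⟨x, hx, rfl⟩, rfl⟩
      · apply Submodule.mem_sup_right
        refine Submodule.mem_iSup_of_mem _ (Submodule.mem_iSup_of_mem ?_ (hEmem h 1 x x.2))
        intro h2
        apply hh
        have := congrArg Subtype.val h2
        simpa [MonoidHom.mem_ker] using this
    have h2 : U.map (E 1).subtype = E 1 := by
      have h3 := sup_inf_assoc_of_le (⨆ χ, ⨆ (_ : χ ≠ 1), E χ) hUE
      rw [h1, top_inf_eq, inf_comm, (hind 1).eq_bot, sup_bot_eq] at h3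
      exact h3.symm
    apply Submodule.map_injective_of_injective (E 1).injective_subtype
    rw [h2, Submodule.map_subtype_top]
  have hlt : Nat.card c.ker < Nat.card G := by
    refine lt_of_le_of_ne (Subgroup.card_le_card_group _) fun h => hg ?_
    have hk := Subgroup.eq_top_of_card_eq _ h
    have hT : E 1 = ⊤ := (hirr.2 (E 1) (by
      rintro h _ ⟨x, hx, rfl⟩
      exact hker ⟨h, hk ▸ Subgroup.mem_top h⟩ x hx)).resolve_left hEne
    refine ⟨Units.mk0 a ha0, fun x => ?_⟩
    have : x ∈ E 1 := hT ▸ Submodule.mem_top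
    rw [hE1, End.mem_eigenspace_iff] at this
    exact this
  obtain ⟨b, hb⟩ := ih c.ker (hG.to_subgroup _) (fun x => Subtype.ext (by simpa using hexp x))
    (by omega) (E 1) _ hirr'
  obtain ⟨e, he⟩ := hG.index c.ker
  rw [Subgroup.index_ker] at he
  exact ⟨e + b, by rw [hdim, hb, he, pow_add]⟩

/-- Degree of the cyclotomic extension. -/
theorem finrank_cyclotomic (k : Type*) [Field k] (N : ℕ) [NeZero N] [NeZero (N : k)] :
    finrank k (CyclotomicField N k) ∣ N.totient := by
  have : FiniteDimensional k (CyclotomicField N k) :=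
    IsCyclotomicExtension.finiteDimensional {N} k _
  have := IsCyclotomicExtension.isGalois {N} k (CyclotomicField N k)
  rw [← IsGalois.card_aut_eq_finrank, ← ZMod.card_units_eq_totient, ← Nat.card_eq_fintype_card]
  exact Subgroup.card_dvd_of_injective _
    ((IsCyclotomicExtension.zeta_spec N k (CyclotomicField N k)).autToPow_injective k)

/-- A minimal nonzero invariant subspace. -/
theorem exists_irr {L G X : Type*} [Field L] [Group G] [AddCommGroup X] [Module L X]
    [FiniteDimensional L X] [Nontrivial X] (σ : Representation L G X) :
    ∃ (W : Submodule L X) (h : ∀ g, ∀ x ∈ W, σ g x ∈ W), (restrictRep σ W h).IsIrreducibleRep := by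
  obtain ⟨W, ⟨hW0, hW⟩, hmin⟩ := WellFounded.has_min (wellFounded_lt (α := Submodule L X))
    {W | W ≠ ⊥ ∧ ∀ g, ∀ x ∈ W, σ g x ∈ W} ⟨⊤, top_ne_bot, by simp⟩
  refine ⟨W, hW, Submodule.nontrivial_iff_ne_bot.2 hW0, fun U hU => ?_⟩
  by_cases hU0 : U = ⊥
  · exact Or.inl hU0
  right
  by_contra hUt
  refine hmin (U.map W.subtype) ⟨?_, ?_⟩ (lt_of_le_of_ne (Submodule.map_subtype_le _ _) ?_)
  · exact fun h => hU0 (Submodule.map_injective_of_injective W.injective_subtype (by simpa using h))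
  · rintro g _ ⟨x, hx, rfl⟩
    exact ⟨_, hU g ⟨x, hx, rfl⟩, rfl⟩
  · intro h
    apply hUt
    apply Submodule.map_injective_of_injective W.injective_subtype
    rw [h, Submodule.map_subtype_top]

open TensorProduct in
theorem finrank_dvd_of_ext {k : Type*} (L : Type*) {G V : Type*} [Field k] [Field L] [Algebra k L]
    [FiniteDimensional k L] [Group G] [AddCommGroup V] [Module k V] [FiniteDimensional k V]
    (ρ : Representation k G V) (hirr : ρ.IsIrreducibleRep) :
    ∃ (W : Submodule L (L ⊗[k] V)) (σ : Representation L G W), σ.IsIrreducibleRep ∧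
      finrank k V ∣ finrank k L * finrank L W := by
  have := hirr.1
  let σ : Representation L G (L ⊗[k] V) :=
    { toFun := fun g => (ρ g).baseChange L
      map_one' := by ext; simp
      map_mul' := fun a b => by ext; simp }
  obtain ⟨W, hW, hWi⟩ := exists_irr σ
  refine ⟨W, _, hWi, ?_⟩
  have : Module.Free L W := Module.Free.of_divisionRing L W
  rw [finrank_mul_finrank k L W]
  let σ' : Representation k G (L ⊗[k] V) :=
    { toFun := fun g => (σ g).restrictScalars k
      map_one' := by ext; simp
      map_mul' := fun a b => by ext; simp }
  let b := finBasis k L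
  let e := TensorProduct.equivFinsuppOfBasisLeft (N := V) b
  refine dvd_aux ρ hirr σ' Finset.univ (fun i => (Finsupp.lapply i).comp e.toLinearMap) ?_
    (W.restrictScalars k) hW ?_
  · intro i g x
    induction x using TensorProduct.induction_on with
    | zero => simp
    | add x y hx hy => simp only [map_add, hx, hy]
    | tmul x y => simp [σ', σ, e]
  · intro x _ h
    apply e.injective
    ext i
    simpa using h i (Finset.mem_univ i)

end PRepAux

/-- The dimension of every irreducible representation of a finite `p`-group over a
finite field of characteristic `≠ p` divides `(p-1)·p^j` for some `j`. -/
theorem finrank_irreducible_rep_isPGroup_dvd_finiteField (p : ℕ) (hp : p.Prime)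
    (k : Type*) [Field k] [Finite k] (hchar : ringChar k ≠ p)
    (G : Type*) [Group G] [Finite G] (hG : IsPGroup p G)
    (V : Type*) [AddCommGroup V] [Module k V] [FiniteDimensional k V]
    (ρ : Representation k G V) (hirr : ρ.IsIrreducibleRep) :
    ∃ j : ℕ, Module.finrank k V ∣ (p - 1) * p ^ j := by
  have := Fact.mk hp
  obtain ⟨n, hn⟩ := IsPGroup.iff_card.1 hG
  have : NeZero (p ^ (n + 1)) := ⟨(pow_pos hp.pos _).ne'⟩
  have : NeZero ((p ^ (n + 1) : ℕ) : k) := ⟨by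
    intro h
    rw [Nat.cast_pow] at h
    have h1 := (ringChar.spec k p).1 (pow_eq_zero_iff (by omega) |>.1 h)
    rcases (Nat.dvd_prime hp).1 h1 with h2 | h2
    · exact CharP.ringChar_ne_one h2
    · exact hchar h2⟩
  let L := CyclotomicField (p ^ (n + 1)) k
  have : FiniteDimensional k L := IsCyclotomicExtension.finiteDimensional {p ^ (n + 1)} k _
  obtain ⟨W, σ, hσ, hdvd⟩ := PRepAux.finrank_dvd_of_ext L ρ hirr
  have hs : (Polynomial.X ^ (p ^ (n + 1)) - 1 : Polynomial L).Splits :=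
    Polynomial.X_pow_sub_one_splits (IsCyclotomicExtension.zeta_spec (p ^ (n + 1)) k L)
  obtain ⟨a, ha⟩ := PRepAux.pow_finrank hp (n + 1) hs (Nat.card G) G hG
    (fun g => by rw [pow_succ, pow_mul, ← hn, pow_card_eq_one', one_pow]) le_rfl W σ hσ
  have hd := PRepAux.finrank_cyclotomic k (p ^ (n + 1))
  rw [Nat.totient_prime_pow_succ hp] at hd
  rw [ha] at hdvd
  refine ⟨n + a, hdvd.trans ?_⟩
  have h := mul_dvd_mul hd (dvd_refl (p ^ a))
  have h' : p ^ n * (p - 1) * p ^ a = (p - 1) * p ^ (n + a) := by ring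
  exact h' ▸ h
end

section
/- Let G be a topologically finitely generated profinite group and n ∈ ℕ. Then there are only finitely many homomorphisms ψ : G → GL_n(ℚ) with open kernel, up to conjugation: there exist finitely many homomorphisms ψ_1, …, ψ_r : G → GL_n(ℚ), each with open kernel, such that every homomorphism ψ : G → GL_n(ℚ) with open kernel satisfies ψ = g ψ_i(·) g^{−1} for some i ∈ {1, …, r} and some g ∈ GL_n(ℚ). -/
open Matrix

theorem aux_compl {α : Type*} [CompleteLattice α] [IsModularLattice α] (s : Set α)
    (hs : s.Finite) (hat : ∀ a ∈ s, IsAtom a) (htop : sSup s = ⊤) (b : α) :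
    ∃ t ⊆ s, IsCompl b (sSup t) := by
  have hfin : {t | t ⊆ s ∧ Disjoint b (sSup t)}.Finite :=
    (hs.powerset).subset fun t ht => ht.1
  obtain ⟨t, ht⟩ := hfin.exists_maximal ⟨∅, by simp⟩
  refine ⟨t, ht.1.1, ht.1.2, ?_⟩
  rw [codisjoint_iff, eq_top_iff, ← htop]
  refine sSup_le fun a ha => ?_
  by_contra hle
  have hd : Disjoint (b ⊔ sSup t) a := (IsAtom.not_le_iff_disjoint (hat a ha)).1 hle |>.symm
  have h2 : Disjoint b (sSup t ⊔ a) := ht.1.2.disjoint_sup_right_of_disjoint_sup_left hd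
  have h3 : insert a t ⊆ t := by
    refine ht.2 ⟨Set.insert_subset ha ht.1.1, ?_⟩ (Set.subset_insert a t)
    rwa [sSup_insert, sup_comm]
  exact hle ((le_sSup (h3 (Set.mem_insert a t))).trans le_sup_right)

theorem aux_mod (R M : Type*) [Ring R] [AddCommGroup M] [Module R M] [IsSemisimpleModule R M]
    [Module.Finite R M] :
    ∃ s : Set (Submodule R M), s.Finite ∧ ∀ (V : Type) [AddCommGroup V] [Module R V]
      (f : M →ₗ[R] V), Function.Surjective f → ∃ t ⊆ s, Nonempty (V ≃ₗ[R] ↥(sSup t)) := by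
  obtain ⟨s, h1, h2, h3⟩ := IsSemisimpleModule.exists_sSupIndep_sSup_simples_eq_top R M
  refine ⟨s, WellFoundedGT.finite_of_sSupIndep h1, fun V _ _ f hf => ?_⟩
  obtain ⟨t, hts, ht⟩ := aux_compl s (WellFoundedGT.finite_of_sSupIndep h1)
    (fun a ha => isSimpleModule_iff_isAtom.1 (h3 a ha)) h2 (LinearMap.ker f)
  exact ⟨t, hts, ⟨(f.quotKerEquivOfSurjective hf).symm.trans
    (Submodule.quotientEquivOfIsCompl _ _ ht)⟩⟩

/-- finitely many rational representations of a finite group. -/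
theorem aux_finite_group.{u} (Q : Type u) [Group Q] [Finite Q] (n : ℕ) :
    ∃ (F : Type u) (_ : Finite F) (f : (Q →* GL (Fin n) ℚ) → F), ∀ ψ φ, f ψ = f φ →
      ∃ g : GL (Fin n) ℚ, ∀ x, ψ x = g * φ x * g⁻¹ := by
  let A := MonoidAlgebra ℚ Q
  obtain ⟨s, hs, H⟩ := aux_mod A (Fin n → A)
  let ρ : (Q →* GL (Fin n) ℚ) → Representation ℚ Q (Fin n → ℚ) := fun ψ =>
    ((Matrix.toLinAlgEquiv' : Matrix (Fin n) (Fin n) ℚ ≃ₐ[ℚ] _) : _ →* _).comp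
      ((Units.coeHom _).comp ψ)
  have hρ : ∀ ψ x v, ρ ψ x v = (ψ x : Matrix (Fin n) (Fin n) ℚ) *ᵥ v := fun ψ x v => rfl
  have key : ∀ ψ : Q →* GL (Fin n) ℚ, ∃ t ⊆ s, Nonempty ((ρ ψ).asModule ≃ₗ[A] ↥(sSup t)) := by
    intro ψ
    let e : Fin n → (ρ ψ).asModule := fun i => (ρ ψ).asModuleEquiv.symm (Pi.single i 1)
    refine H (ρ ψ).asModule (Fintype.linearCombination A e) fun v => ?_
    refine ⟨fun i => algebraMap ℚ A ((ρ ψ).asModuleEquiv v i), ?_⟩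
    apply (ρ ψ).asModuleEquiv.injective
    rw [Fintype.linearCombination_apply, map_sum]
    conv_rhs => rw [pi_eq_sum_univ' ((ρ ψ).asModuleEquiv v)]
    refine Finset.sum_congr rfl fun i _ => ?_
    rw [← Representation.asModuleEquiv_symm_map_smul]
    simp
  choose t hts ht using key
  have : Finite (s.powerset) := hs.powerset.to_subtype
  refine ⟨s.powerset, this, fun ψ => ⟨t ψ, hts ψ⟩, fun ψ φ h => ?_⟩
  have h : t ψ = t φ := congrArg Subtype.val h
  obtain ⟨e1⟩ := ht ψ
  obtain ⟨e2⟩ := ht φ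
  rw [← h] at e2
  let e : (ρ φ).asModule ≃ₗ[A] (ρ ψ).asModule := e2.trans e1.symm
  let e' : (Fin n → ℚ) ≃ₗ[ℚ] (Fin n → ℚ) :=
    ((ρ φ).asModuleEquiv.symm.trans (e.restrictScalars ℚ)).trans (ρ ψ).asModuleEquiv
  have he' : ∀ x v, e' (ρ φ x v) = ρ ψ x (e' v) := by
    intro x v
    have h1 : e' (ρ φ x v) = (ρ ψ).asModuleEquiv (e ((ρ φ).asModuleEquiv.symm (ρ φ x v))) := rfl
    have h2 : e' v = (ρ ψ).asModuleEquiv (e ((ρ φ).asModuleEquiv.symm v)) := rfl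
    rw [h1, h2, Representation.asModuleEquiv_symm_map_rho, map_smul,
      Representation.asModuleEquiv_map_smul]
    simp
  let g : GL (Fin n) ℚ := Units.mapEquiv
    ((Matrix.toLinAlgEquiv' : Matrix (Fin n) (Fin n) ℚ ≃ₐ[ℚ] _).symm : _ ≃* _)
    ((LinearMap.GeneralLinearGroup.generalLinearEquiv ℚ (Fin n → ℚ)).symm e')
  have hg : ∀ v, (g : Matrix (Fin n) (Fin n) ℚ) *ᵥ v = e' v := by
    intro v
    have : Matrix.toLinAlgEquiv' (g : Matrix (Fin n) (Fin n) ℚ) = (e' : (Fin n → ℚ) →ₗ[ℚ] _) :=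
      (Matrix.toLinAlgEquiv' : Matrix (Fin n) (Fin n) ℚ ≃ₐ[ℚ] _).apply_symm_apply _
    exact LinearMap.congr_fun this v
  refine ⟨g, fun x => ?_⟩
  rw [eq_mul_inv_iff_mul_eq]
  apply Units.ext
  apply Matrix.toLin'.injective
  ext1 i
  ext1
  have := he' x (Pi.single i 1)
  rw [hρ, hρ, ← hg, ← hg] at this
  simpa [Matrix.mulVec_mulVec] using this.symm

theorem aux_pow {R : Type*} [Ring R] (x : R) (n : ℕ) :
    ∃ c : R, (1 + x) ^ n = 1 + n * x + x * x * c := by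
  induction n with
  | zero => exact ⟨0, by simp⟩
  | succ n ih =>
    obtain ⟨c, hc⟩ := ih
    refine ⟨c + n + c * x, ?_⟩
    have hcomm : (n : R) * x * x = x * x * n := by
      rw [mul_assoc]; exact (Nat.cast_commute n (x * x)).eq
    rw [pow_succ, hc]
    push_cast
    have : (1 + n * x + x * x * c) * (1 + x)
      = 1 + (n + 1) * x + (x * x * c + n * x * x + x * x * (c * x)) := by noncomm_ring
    rw [this, hcomm]; noncomm_ring

theorem aux_step {n : ℕ} (B : Matrix (Fin n) (Fin n) ℤ) (p : ℕ) (hp : p.Prime) (k : ℕ)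
    (h : (1 + (3 : ℤ) ^ (k + 1) • B) ^ p = 1) : ∃ D, B = (3 : ℤ) • D := by
  have hne : ∀ m : ℕ, (3 : ℤ) ^ m ≠ 0 := fun m => pow_ne_zero _ (by norm_num)
  by_cases hp3 : p = 3
  · subst hp3
    refine ⟨-((3 : ℤ) ^ k • B ^ 2 + (3 : ℤ) ^ (2 * k) • B ^ 3), ?_⟩
    have h2 : (3 : ℤ) ^ (k + 2) • (B + (3 : ℤ) ^ (k + 1) • B ^ 2 + (3 : ℤ) ^ (2 * k + 1) • B ^ 3)
        = 0 := by
      have e : (1 + (3 : ℤ) ^ (k + 1) • B) ^ 3 = 1 + (3 : ℤ) ^ (k + 2) •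
          (B + (3 : ℤ) ^ (k + 1) • B ^ 2 + (3 : ℤ) ^ (2 * k + 1) • B ^ 3) := by
        simp only [pow_succ, pow_zero, one_mul, mul_add, add_mul, mul_one, smul_add,
          Matrix.smul_mul, Matrix.mul_smul, smul_smul]
        simp only [← pow_succ]
        module
      rw [e] at h
      simpa using h
    have h3 := (smul_eq_zero.1 h2).resolve_left (hne _)
    rw [add_assoc] at h3
    refine (eq_neg_of_add_eq_zero_left h3).trans ?_
    simp only [smul_neg, smul_add, smul_smul, ← pow_succ']
  · obtain ⟨c, hc⟩ := aux_pow ((3 : ℤ) ^ (k + 1) • B) p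
    rw [hc] at h
    have h2 : (3 : ℤ) ^ (k + 1) • ((p : ℤ) • B + (3 : ℤ) ^ (k + 1) • (B * B * c)) = 0 := by
      have : (p : Matrix (Fin n) (Fin n) ℤ) * (3 : ℤ) ^ (k + 1) • B
          = (3 : ℤ) ^ (k + 1) • (p : ℤ) • B := by
        rw [Matrix.mul_smul, ← nsmul_eq_mul, natCast_zsmul]
      rw [this, add_assoc, add_eq_left] at h
      rw [← h, smul_add]
      simp only [Matrix.smul_mul, Matrix.mul_smul]
    have h3 := (smul_eq_zero.1 h2).resolve_left (hne _)
    have hcop : IsCoprime (p : ℤ) 3 := by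
      have := (Nat.coprime_primes hp Nat.prime_three).2 hp3
      exact_mod_cast Nat.isCoprime_iff_coprime.2 this
    obtain ⟨u, v, huv⟩ := hcop
    refine ⟨-(u • (3 : ℤ) ^ k • (B * B * c)) + v • B, ?_⟩
    have h4 : (p : ℤ) • B = -((3 : ℤ) ^ (k + 1) • (B * B * c)) := eq_neg_of_add_eq_zero_left h3
    calc B = (u * p + v * 3) • B := by rw [huv, one_smul]
      _ = u • (p : ℤ) • B + (v * 3) • B := by rw [add_smul, mul_smul]
      _ = _ := by rw [h4, pow_succ]; module

theorem aux_prime {n : ℕ} (A : Matrix (Fin n) (Fin n) ℤ) (p : ℕ) (hp : p.Prime)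
    (h : A ^ p = 1) (h3 : ∃ B, A = 1 + (3 : ℤ) • B) : A = 1 := by
  have key : ∀ k : ℕ, ∃ B, A = 1 + (3 : ℤ) ^ (k + 1) • B := by
    intro k
    induction k with
    | zero => simpa using h3
    | succ k ih =>
      obtain ⟨B, hB⟩ := ih
      obtain ⟨D, hD⟩ := aux_step B p hp k (by rw [← hB, h])
      refine ⟨D, ?_⟩
      rw [hB, hD, smul_smul, ← pow_succ]
  rw [← sub_eq_zero]
  ext i j
  obtain ⟨B, hB⟩ := key ((A - 1) i j).natAbs
  apply Int.eq_zero_of_abs_lt_dvd (m := 3 ^ (((A - 1) i j).natAbs + 1))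
  · have : A - 1 = (3 : ℤ) ^ (((A - 1) i j).natAbs + 1) • B := by
      rw [sub_eq_iff_eq_add', ← hB]
    refine ⟨B i j, ?_⟩
    conv_lhs => rw [this]
    simp
  · rw [Int.abs_eq_natAbs]
    have := Nat.lt_pow_self (n := ((A - 1) i j).natAbs + 1) (a := 3) (by norm_num)
    have h2 : ((A - 1) i j).natAbs < 3 ^ (((A - 1) i j).natAbs + 1) := by omega
    exact_mod_cast h2

theorem aux_mod3 {n : ℕ} (A : Matrix (Fin n) (Fin n) ℤ)
    (h : (Int.castRingHom (ZMod 3)).mapMatrix A = 1) : ∃ B, A = 1 + (3 : ℤ) • B := by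
  have : ∀ i j, (3 : ℤ) ∣ (A - 1) i j := by
    intro i j
    have h2 : (Int.castRingHom (ZMod 3)).mapMatrix (A - 1) = 0 := by rw [map_sub, h]; simp
    have := congrFun (congrFun h2 i) j
    exact (ZMod.intCast_zmod_eq_zero_iff_dvd _ 3).1 this
  choose B hB using this
  refine ⟨Matrix.of B, ?_⟩
  rw [← sub_eq_iff_eq_add']
  ext i j
  simpa using hB i j

theorem aux_order {n : ℕ} (m : ℕ) (hm : 0 < m) (A : Matrix (Fin n) (Fin n) ℤ)
    (hA : A ^ m = 1) (h : (Int.castRingHom (ZMod 3)).mapMatrix A = 1) : A = 1 := by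
  induction m using Nat.strong_induction_on with
  | _ m ih =>
    by_cases h1 : m = 1
    · simpa [h1] using hA
    · have hp := Nat.minFac_prime h1
      have hd := Nat.minFac_dvd m
      refine ih (m / m.minFac) (Nat.div_lt_self hm hp.one_lt)
        (Nat.div_pos (Nat.le_of_dvd hm hd) hp.pos) ?_
      apply aux_prime _ _ hp
      · rw [← pow_mul, Nat.div_mul_cancel hd, hA]
      · apply aux_mod3
        rw [map_pow, h, one_pow]

theorem aux_lattice {G : Type*} [Group G] (n : ℕ) (ψ : G →* GL (Fin n) ℚ)
    (hfin : (Set.range ψ).Finite) :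
    ∃ φ : G →* Matrix (Fin n) (Fin n) ℤ, ∀ x, φ x = 1 ↔ ψ x = 1 := by
  let ρ : G →* Module.End ℤ (Fin n → ℚ) :=
    { toFun := fun x => (Matrix.toLin' (ψ x : Matrix (Fin n) (Fin n) ℚ)).restrictScalars ℤ
      map_one' := by ext; simp
      map_mul' := fun x y => by ext; simp }
  have hρ : ∀ x v, ρ x v = (ψ x : Matrix (Fin n) (Fin n) ℚ) *ᵥ v := fun x v => rfl
  let T : Set (Fin n → ℚ) := Set.range fun p : Set.range ψ × Fin n =>
    ((p.1 : GL (Fin n) ℚ) : Matrix (Fin n) (Fin n) ℚ) *ᵥ Pi.single p.2 1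
  have : Finite (Set.range ψ) := hfin
  have hT : T.Finite := Set.finite_range _
  let L : Submodule ℤ (Fin n → ℚ) := Submodule.span ℤ T
  have hL : ∀ x, ∀ v ∈ L, ρ x v ∈ L := by
    intro x
    change L ≤ L.comap (ρ x)
    rw [Submodule.span_le]
    rintro _ ⟨⟨⟨_, y, rfl⟩, i⟩, rfl⟩
    apply Submodule.subset_span
    refine ⟨⟨⟨_, x * y, rfl⟩, i⟩, ?_⟩
    simp only [hρ, Matrix.mulVec_mulVec, map_mul, Units.val_mul]
  have hspan : Submodule.span ℚ (L : Set (Fin n → ℚ)) = ⊤ := by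
    rw [eq_top_iff, ← (Pi.basisFun ℚ (Fin n)).span_eq]
    apply Submodule.span_mono
    rintro _ ⟨i, rfl⟩
    apply Submodule.subset_span
    refine ⟨⟨⟨_, 1, rfl⟩, i⟩, ?_⟩
    simp only [map_one, Units.val_one, Matrix.one_mulVec, Pi.basisFun_apply]
  have hLat : Submodule.IsLattice ℚ L := ⟨Submodule.fg_span hT, hspan⟩
  have hfr : Module.finrank ℤ L = n := by
    simpa using Submodule.IsLattice.finrank_of_pi ℚ L
  have : Module.Free ℤ L := Submodule.IsLattice.free ℚ L
  let b : Module.Basis (Fin n) ℤ L := Module.finBasisOfFinrankEq ℤ L hfr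
  let σ : G →* Module.End ℤ L :=
    { toFun := fun x => (ρ x).restrict (hL x)
      map_one' := by ext; simp
      map_mul' := fun x y => by ext; simp }
  let τ : Module.End ℤ L →* Matrix (Fin n) (Fin n) ℤ := (LinearMap.toMatrixAlgEquiv b : _ ≃ₐ[ℤ] _)
  refine ⟨τ.comp σ, fun x => ?_⟩
  have h1 : (τ.comp σ) x = 1 ↔ σ x = 1 :=
    map_eq_one_iff (LinearMap.toMatrixAlgEquiv b) (LinearMap.toMatrixAlgEquiv b).injective
  rw [h1]
  constructor
  · intro h
    have h2 : ∀ v ∈ L, (ψ x : Matrix (Fin n) (Fin n) ℚ) *ᵥ v = v := by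
      intro v hv
      exact congrArg Subtype.val (LinearMap.congr_fun h ⟨v, hv⟩)
    have h3 : Matrix.toLin' (ψ x : Matrix (Fin n) (Fin n) ℚ) = LinearMap.id :=
      LinearMap.ext_on hspan fun v hv => h2 v hv
    apply Units.ext
    apply Matrix.toLin'.injective
    rw [h3]; simp
  · intro h
    ext v
    change (((ψ x : Matrix (Fin n) (Fin n) ℚ) *ᵥ (v : Fin n → ℚ)) : Fin n → ℚ) _ = _
    simp [h]

theorem aux_red {G : Type*} [Group G] [TopologicalSpace G] [IsTopologicalGroup G]
    [CompactSpace G] (n : ℕ) (ψ : G →* GL (Fin n) ℚ) (ho : IsOpen (ψ.ker : Set G)) :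
    ∃ φ : G →* (Matrix (Fin n) (Fin n) (ZMod 3))ˣ, φ.ker = ψ.ker := by
  have hq : Finite (G ⧸ ψ.ker) := Subgroup.quotient_finite_of_isOpen _ ho
  have hr : Finite ψ.range := Finite.of_equiv _ (QuotientGroup.quotientKerEquivRange ψ).toEquiv
  obtain ⟨φ, hφ⟩ := aux_lattice n ψ hr
  refine ⟨(((Int.castRingHom (ZMod 3)).mapMatrix (m := Fin n)).toMonoidHom.comp φ).toHomUnits, ?_⟩
  ext x
  rw [MonoidHom.mem_ker, MonoidHom.mem_ker, ← hφ x, Units.ext_iff]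
  change (Int.castRingHom (ZMod 3)).mapMatrix (φ x) = 1 ↔ _
  constructor
  · intro h
    refine aux_order (Nat.card (G ⧸ ψ.ker)) Nat.card_pos _ ?_ h
    rw [← map_pow, hφ]
    have : ((x : G ⧸ ψ.ker)) ^ Nat.card (G ⧸ ψ.ker) = 1 := pow_card_eq_one'
    rw [← QuotientGroup.mk_pow, QuotientGroup.eq_one_iff] at this
    exact this
  · intro h
    rw [h, map_one]

theorem aux_fin_homs {G : Type*} [Group G] [TopologicalSpace G] [IsTopologicalGroup G]
    (hfg : ∃ S : Finset G, Dense ((Subgroup.closure (S : Set G) : Subgroup G) : Set G))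
    (H : Type*) [Group H] [Finite H] : {φ : G →* H | IsOpen (φ.ker : Set G)}.Finite := by
  obtain ⟨S, hS⟩ := hfg
  let _ : TopologicalSpace H := ⊥
  have : DiscreteTopology H := ⟨rfl⟩
  have hc : ∀ φ : G →* H, IsOpen (φ.ker : Set G) → Continuous φ := by
    intro φ h
    apply continuous_of_continuousAt_one
    rw [ContinuousAt, map_one, nhds_discrete H, Filter.tendsto_pure]
    exact h.mem_nhds (one_mem φ.ker)
  refine Set.Finite.of_finite_image (f := fun φ : G →* H => fun s : S => φ s) (Set.toFinite _) ?_
  intro φ hφ φ' hφ' h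
  have h1 : Subgroup.closure (S : Set G) ≤ φ.eqLocus φ' := by
    rw [Subgroup.closure_le]
    intro s hs
    exact congrFun h ⟨s, hs⟩
  exact DFunLike.coe_injective ((hc φ hφ).ext_on hS (hc φ' hφ') fun x hx => h1 hx)

theorem finitely_many_rational_reps_of_profinite
    (G : Type*) [Group G] [TopologicalSpace G] [IsTopologicalGroup G]
    [CompactSpace G] [T2Space G] [TotallyDisconnectedSpace G]
    (hfg : ∃ S : Finset G, Dense ((Subgroup.closure (S : Set G) : Subgroup G) : Set G))
    (n : ℕ) :
    ∃ (r : ℕ) (ψs : Fin r → (G →* GL (Fin n) ℚ)),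
      (∀ i, IsOpen ((ψs i).ker : Set G)) ∧
      ∀ ψ : G →* GL (Fin n) ℚ, IsOpen (ψ.ker : Set G) →
        ∃ (i : Fin r) (g : GL (Fin n) ℚ), ∀ x : G, ψ x = g * ψs i x * g⁻¹ := by
  let P := {φ : G →* (Matrix (Fin n) (Fin n) (ZMod 3))ˣ | IsOpen (φ.ker : Set G)}
  have hP : P.Finite := aux_fin_homs hfg _
  have : Finite P := hP
  let N : Subgroup G := ⨅ φ : P, φ.1.ker
  have hNn : N.Normal := Subgroup.normal_iInf_normal fun φ => inferInstance
  have hNo : IsOpen (N : Set G) := by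
    rw [Subgroup.coe_iInf]
    exact isOpen_iInter_of_finite fun φ => φ.2
  have hNψ : ∀ ψ : G →* GL (Fin n) ℚ, IsOpen (ψ.ker : Set G) → N ≤ ψ.ker := by
    intro ψ h
    obtain ⟨φ, hφ⟩ := aux_red n ψ h
    rw [← hφ]
    exact iInf_le (fun φ : P => φ.1.ker) ⟨φ, by change IsOpen (φ.ker : Set G); rwa [hφ]⟩
  have hq : Finite (G ⧸ N) := Subgroup.quotient_finite_of_isOpen _ hNo
  obtain ⟨F, hF, f, hf⟩ := aux_finite_group (G ⧸ N) n
  have : Finite (Set.range f) := Finite.Set.subset Set.univ (Set.subset_univ _)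
  obtain ⟨r, ⟨e⟩⟩ := Finite.exists_equiv_fin (Set.range f)
  choose c hc using fun y : Set.range f => y.2
  refine ⟨r, fun i => (c (e.symm i)).comp (QuotientGroup.mk' N), fun i => ?_, fun ψ hψ => ?_⟩
  · refine Subgroup.isOpen_mono ?_ hNo
    intro x hx
    have : QuotientGroup.mk' N x = 1 := (QuotientGroup.eq_one_iff x).2 hx
    rw [MonoidHom.mem_ker, MonoidHom.comp_apply, this, map_one]
  · let ψ' : G ⧸ N →* GL (Fin n) ℚ := QuotientGroup.lift N ψ (hNψ ψ hψ)
    let y : Set.range f := ⟨f ψ', ψ', rfl⟩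
    obtain ⟨g, hg⟩ := hf ψ' (c y) (hc y).symm
    refine ⟨e y, g, fun x => ?_⟩
    simpa [ψ'] using hg x
end
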